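/- arXiv:1504.04069 — 3 statements merged into one kernel-verified Lean document; each statement's English description precedes it below -/
import Mathlib

section
/- Suppose G′ is a finite simple graph that is not a disjoint union of copies of K_2, and G is obtained from G′ by attaching finitely many (possibly empty) trees to its vertices (each attached tree is glued by identifying one of its vertices with a vertex of G′), with at least one attached tree having at least one edge. Then H_G = H_{G′}, H_G^ψ = H_{G′}^ψ, and H_G^φ = H_{G′}^φ. In particular, if G is a tree with at least 3 vertices, then CE_H(G) = CE_H^ψ(G) = CE_H^φ(G) = 1. -/
open Set Matrix

noncomputable section

/-- Entrywise power function `x ↦ x^α` on nonnegative reals, with the convention `0^α := 0`. -/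
def powEnt (α x : ℝ) : ℝ := if x = 0 then 0 else x ^ α

/-- The odd extension `ψ_α(x) = sgn(x)|x|^α` of the power function, with `ψ_α(0) = 0`. -/
def psiF (α x : ℝ) : ℝ := Real.sign x * |x| ^ α

/-- The even extension `φ_α(x) = |x|^α` of the power function, with `φ_α(0) = 0`. -/
def phiF (α x : ℝ) : ℝ := if x = 0 then 0 else |x| ^ α

/-- `P_G(I)`: positive semidefinite matrices with entries in `I` and zeros outside
the edge pattern of `G`. -/
def PsetG {V : Type*} [Fintype V] (G : SimpleGraph V) (I : Set ℝ) :
    Set (Matrix V V ℝ) :=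
  {A | A.PosSemidef ∧ (∀ i j, A i j ∈ I) ∧ ∀ i j, i ≠ j → ¬ G.Adj i j → A i j = 0}

/-- `H_G`: the set of entrywise powers preserving `P_G([0,∞))`. -/
def HsetG {V : Type*} [Fintype V] (G : SimpleGraph V) : Set ℝ :=
  {α | ∀ A ∈ PsetG G (Ici (0 : ℝ)), A.map (powEnt α) ∈ PsetG G univ}

/-- `H_G^ψ`: the set of powers `α` such that `ψ_α` preserves `P_G(ℝ)`. -/
def HsetPsi {V : Type*} [Fintype V] (G : SimpleGraph V) : Set ℝ :=
  {α | ∀ A ∈ PsetG G univ, A.map (psiF α) ∈ PsetG G univ}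

/-- `H_G^φ`: the set of powers `α` such that `φ_α` preserves `P_G(ℝ)`. -/
def HsetPhi {V : Type*} [Fintype V] (G : SimpleGraph V) : Set ℝ :=
  {α | ∀ A ∈ PsetG G univ, A.map (phiF α) ∈ PsetG G univ}

/-- The set of which the critical exponent is the least element:
all `α` such that every `β ≥ α` lies in `H`. -/
def CEset (H : Set ℝ) : Set ℝ := {α | ∀ β, α ≤ β → β ∈ H}

/-- The positive integers, as a set of reals. -/
def posNats : Set ℝ := {x | ∃ k : ℕ, 0 < k ∧ x = k}

/-- The odd positive integers `−1+2ℕ`, as a set of reals. -/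
def oddNats : Set ℝ := {x | ∃ k : ℕ, 0 < k ∧ x = 2 * k - 1}

/-- The even positive integers `2ℕ`, as a set of reals. -/
def evenNats : Set ℝ := {x | ∃ k : ℕ, 0 < k ∧ x = 2 * k}

/-!
A matrix of `P_G(I)` can be reduced at a vertex `v` with a single neighbour: the Schur complement of
its entry at `v` changes only diagonal entries, so it lies again in `P_G(I)` and no longer involves
`v`. For `α ≥ 1` the function `x ↦ x ^ α` is superadditive on `[0, ∞)`, and therefore the Schur
complement of `f[A]` is `f` of the Schur complement of `A` plus a nonnegative diagonal matrix. So if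
`f[-]` preserves positivity without `v`, it does so with `v`, and an attached forest can be added
vertex by vertex. A vertex with two neighbours forces `α ≥ 1`, through the matrix with rows
`(2, 1, 1)`, `(1, 1, 0)`, `(1, 0, 1)`.
-/

open scoped ComplexOrder

section PathConvex

variable {V : Type*} {F : SimpleGraph V} {S : Set V}

/-- A vertex set is path-convex if it contains every path between two of its members. In a forest
this says that it meets each tree in a subtree. -/
def PathConvex (F : SimpleGraph V) (S : Set V) : Prop :=
  ∀ ⦃s⦄, s ∈ S → ∀ ⦃t⦄, t ∈ S → ∀ p : F.Walk s t, p.IsPath → ∀ x ∈ p.support, x ∈ S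

lemma pathConvex_of_pairwise_not_reachable (hS : S.Pairwise fun s t => ¬ F.Reachable s t) :
    PathConvex F S := by
  intro s hs t ht p hp x hx
  obtain rfl : s = t := hS.eq hs ht (not_not.2 p.reachable)
  rw [(SimpleGraph.Walk.isPath_iff_nil.1 hp).eq_nil, SimpleGraph.Walk.mem_support_nil_iff] at hx
  exact hx ▸ hs

lemma PathConvex.subsingleton_neighbors (hS : PathConvex F S) {v : V} (hv : v ∉ S) :
    {w ∈ S | F.Adj v w}.Subsingleton := by
  rintro u ⟨hu, hvu⟩ w ⟨hw, hvw⟩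
  by_contra huw
  refine hv (hS hu hw (.cons hvu.symm (.cons hvw .nil)) ?_ v (by simp))
  simp [SimpleGraph.Walk.cons_isPath_iff, hvu.ne', hvw.ne, huw]

protected lemma PathConvex.insert (hF : F.IsAcyclic) (hS : PathConvex F S) {v : V}
    (hv : ∀ s ∈ S, F.Reachable v s → ∃ u ∈ S, F.Adj v u) : PathConvex F (insert v S) := by
  have from_v : ∀ s ∈ S, ∀ p : F.Walk v s, p.IsPath → ∀ x ∈ p.support, x ∈ insert v S := by
    intro s hs p hp x hx
    obtain ⟨u, hu, hvu⟩ := hv s hs p.reachable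
    by_cases hup : u ∈ p.support
    · cases p with
      | nil => exact .inr (hS hs hs .nil .nil x hx)
      | @cons _ w _ _ q =>
        obtain rfl : u = w := by simpa using hF.eq_snd_of_adj_start hp hvu hup
        exact (List.mem_cons.1 hx).imp_right (hS hu hs q hp.of_cons x)
    · exact .inr (hS hu hs (.cons hvu.symm p) (hp.cons hup) x (List.mem_cons_of_mem _ hx))
  rintro s (rfl | hs) t (rfl | ht) p hp x hx
  · rw [(SimpleGraph.Walk.isPath_iff_nil.1 hp).eq_nil, SimpleGraph.Walk.mem_support_nil_iff] at hx
    exact .inl hx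
  · exact from_v t ht p hp x hx
  · exact from_v s hs p.reverse hp.reverse x (by simpa using hx)
  · exact .inr (hS hs ht p hp x hx)

lemma PathConvex.exists_insert (hF : F.IsAcyclic) (hS : PathConvex F S) (hne : S ≠ univ) :
    ∃ v ∉ S, PathConvex F (insert v S) := by
  by_cases hbd : ∃ v ∉ S, ∃ u ∈ S, F.Adj v u
  · obtain ⟨v, hv, hadj⟩ := hbd
    exact ⟨v, hv, hS.insert hF fun _ _ _ => hadj⟩
  · obtain ⟨v, hv⟩ := (ne_univ_iff_exists_notMem S).1 hne
    refine ⟨v, hv, hS.insert hF fun s hs ⟨p⟩ => ?_⟩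
    obtain ⟨d, -, hd₁, hd₂⟩ := p.reverse.exists_boundary_dart S hs hv
    exact absurd ⟨d.snd, hd₂, d.fst, hd₁, d.adj.symm⟩ hbd

lemma forest_induction [Finite V] (hF : F.IsAcyclic) {R : Set V}
    (hR : R.Pairwise fun a b => ¬ F.Reachable a b) {p : Set V → Prop} (base : p R)
    (insert : ∀ S v, R ⊆ S → v ∉ S → {w ∈ S | F.Adj v w}.Subsingleton → p S → p (insert v S)) :
    p univ := by
  obtain ⟨S, -, ⟨hRS, hS, hpS⟩, hmax⟩ := Finite.exists_le_maximal
    (p := fun S : Set V => R ⊆ S ∧ PathConvex F S ∧ p S) (a := R)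
    ⟨Subset.rfl, pathConvex_of_pairwise_not_reachable hR, base⟩
  suffices S = univ from this ▸ hpS
  by_contra hne
  obtain ⟨v, hv, hSv⟩ := hS.exists_insert hF hne
  exact hv <| hmax ⟨hRS.trans (subset_insert v S), hSv,
    insert S v hRS hv (hS.subsingleton_neighbors hv) hpS⟩ (subset_insert v S) (mem_insert v S)

end PathConvex

lemma exists_adj_adj_ne_of_reachable {V : Type*} {G : SimpleGraph V} {a b : V}
    (h : G.Reachable a b) (hab : a ≠ b) (hadj : ¬ G.Adj a b) :
    ∃ x y z, G.Adj x y ∧ G.Adj x z ∧ y ≠ z := by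
  obtain ⟨p, hp⟩ := h.exists_isPath
  match p with
  | .nil => exact absurd rfl hab
  | .cons h .nil => exact absurd h hadj
  | .cons hax (.cons hxz q) =>
    refine ⟨_, a, _, hax.symm, hxz, ?_⟩
    rintro rfl
    simp at hp

lemma exists_adj_adj_ne_of_three_le_card {V : Type*} [Fintype V] {G : SimpleGraph V}
    (hG : G.Preconnected) (hcard : 3 ≤ Fintype.card V) :
    ∃ x y z, G.Adj x y ∧ G.Adj x z ∧ y ≠ z := by
  obtain ⟨a, b, c, hab, hac, hbc⟩ := Fintype.two_lt_card_iff.1 hcard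
  by_cases hb : G.Adj a b
  · by_cases hc : G.Adj a c
    · exact ⟨a, b, c, hb, hc, hbc⟩
    · exact exists_adj_adj_ne_of_reachable (hG a c) hac hc
  · exact exists_adj_adj_ne_of_reachable (hG a b) hab hb

section SchurComplement

variable {n : Type*}

/-- The Schur complement of the diagonal entry `A v v`, kept at the original size. When
`A v v = 0`, the convention `0⁻¹ = 0` makes it `A` itself. -/
def schurComplementAt {K : Type*} [Field K] (A : Matrix n n K) (v : n) : Matrix n n K :=
  A - (A v v)⁻¹ • vecMulVec (A.col v) (A.row v)

lemma schurComplementAt_apply {K : Type*} [Field K] (A : Matrix n n K) (v i j : n) :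
    schurComplementAt A v i j = A i j - (A v v)⁻¹ * (A i v * A v j) := rfl

lemma schurComplementAt_pivot_row {K : Type*} [Field K] {A : Matrix n n K} {v : n}
    (h : A v v = 0 → A v = 0) : schurComplementAt A v v = 0 := by
  ext j
  rw [schurComplementAt_apply]
  by_cases hv : A v v = 0
  · simp [h hv]
  · simp [hv]

lemma schurComplementAt_symm {K : Type*} [Field K] {A : Matrix n n K} (hA : A.IsSymm) (v i j : n) :
    schurComplementAt A v i j = schurComplementAt A v j i := by
  simp only [schurComplementAt_apply, hA.apply, mul_comm]

lemma schurComplementAt_apply_of_leaf {K : Type*} [Field K] {A : Matrix n n K} {v i j : n}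
    [DecidableEq n] (hA : A.IsSymm) (hv : A v v = 0 → A v = 0)
    (hleaf : {w | w ≠ v ∧ A v w ≠ 0}.Subsingleton) (hij : i ≠ j) :
    schurComplementAt A v i j = if i = v ∨ j = v then 0 else A i j := by
  split_ifs with h
  · rcases h with rfl | rfl
    · exact congrFun (schurComplementAt_pivot_row hv) j
    · rw [← schurComplementAt_symm hA]
      exact congrFun (schurComplementAt_pivot_row hv) i
  · rw [not_or] at h
    have hzero : A i v * A v j = 0 := by
      by_contra hne
      rw [← ne_eq, mul_ne_zero_iff, hA.apply] at hne
      exact hij (hleaf ⟨h.1, hne.1⟩ ⟨h.2, hne.2⟩)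
    rw [schurComplementAt_apply, hzero, mul_zero, sub_zero]

variable {𝕜 : Type*} [RCLike 𝕜] [Finite n] {A : Matrix n n 𝕜} {v : n}

lemma row_eq_zero_of_posSemidef (hA : A.PosSemidef) (hv : A v v = 0) : A v = 0 := by
  classical
  have := Fintype.ofFinite n
  have hcol : A *ᵥ Pi.single v 1 = 0 :=
    (hA.dotProduct_mulVec_zero_iff _).1 (by simpa [single_dotProduct] using hv)
  ext j
  rw [← hA.isHermitian.apply v j]
  simpa using congrFun hcol j

lemma posSemidef_schurComplementAt (hA : A.PosSemidef) (v : n) :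
    (schurComplementAt A v).PosSemidef := by
  classical
  have := Fintype.ofFinite n
  set B : Matrix n n 𝕜 := 1 - (A v v)⁻¹ • vecMulVec (Pi.single v 1) (A.row v)
  have hAB : A * B = schurComplementAt A v := by
    rw [mul_sub, mul_one, mul_smul_comm, mul_vecMulVec, mulVec_single_one, schurComplementAt]
  have hBC : Bᴴ * schurComplementAt A v = schurComplementAt A v := by
    have hrow : Pi.single v 1 ᵥ* schurComplementAt A v = 0 := by
      rw [single_one_vecMul]
      exact schurComplementAt_pivot_row (row_eq_zero_of_posSemidef hA)
    simp only [B, conjTranspose_sub, conjTranspose_one, conjTranspose_smul, conjTranspose_vecMulVec,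
      Pi.star_single, star_one, sub_mul, one_mul, smul_mul_assoc, vecMulVec_mul, hrow,
      vecMulVec_zero, smul_zero, sub_zero]
  have hBAB := hA.conjTranspose_mul_mul_same B
  rwa [mul_assoc, hAB, hBC] at hBAB

lemma posSemidef_of_schurComplementAt (hA : A.IsHermitian) (hv : 0 ≤ A v v)
    (h : (schurComplementAt A v).PosSemidef) : A.PosSemidef := by
  have := Fintype.ofFinite n
  have hcol : A.col v = star (A.row v) := funext fun i => (hA.apply i v).symm
  rw [← sub_add_cancel A ((A v v)⁻¹ • vecMulVec (A.col v) (A.row v))]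
  refine h.add (PosSemidef.smul ?_ (inv_nonneg.2 hv))
  exact hcol ▸ posSemidef_vecMulVec_star_self _

end SchurComplement

/-- `f` is an extension to `I ⊇ [0, ∞)` of the power function `x ↦ x ^ α` on the positive reals,
with `f 0 = 0` and even modulus. -/
structure IsPowerExtension (α : ℝ) (I : Set ℝ) (f : ℝ → ℝ) : Prop where
  map_zero : f 0 = 0
  map_pos : ∀ x, 0 < x → f x = x ^ α
  abs_map : ∀ x ∈ I, |f x| = f |x|
  nonneg_subset : Ici 0 ⊆ I

lemma isPowerExtension_powEnt (α : ℝ) : IsPowerExtension α (Ici 0) (powEnt α) where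
  map_zero := by simp [powEnt]
  map_pos x hx := by simp [powEnt, hx.ne']
  abs_map x hx := by
    have hnonneg : 0 ≤ powEnt α x := by
      unfold powEnt
      split_ifs
      exacts [le_rfl, Real.rpow_nonneg hx α]
    rw [abs_of_nonneg hnonneg, abs_of_nonneg hx]
  nonneg_subset := Subset.rfl

lemma isPowerExtension_phiF (α : ℝ) : IsPowerExtension α univ (phiF α) where
  map_zero := by simp [phiF]
  map_pos x hx := by simp [phiF, hx.ne', abs_of_pos hx]
  abs_map x _ := by
    by_cases hx : x = 0
    · simp [phiF, hx]
    · simp [phiF, hx, Real.abs_rpow_of_nonneg]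
  nonneg_subset := subset_univ _

lemma isPowerExtension_psiF (α : ℝ) : IsPowerExtension α univ (psiF α) where
  map_zero := by simp [psiF]
  map_pos x hx := by simp [psiF, Real.sign_of_pos hx, abs_of_pos hx]
  abs_map x _ := by
    rcases lt_trichotomy x 0 with hx | rfl | hx
    · simp [psiF, Real.sign_of_neg hx, Real.sign_of_pos (abs_pos.2 hx.ne), Real.abs_rpow_of_nonneg]
    · simp [psiF]
    · simp [psiF, Real.sign_of_pos hx, Real.sign_of_pos (abs_pos.2 hx.ne'), Real.abs_rpow_of_nonneg]
  nonneg_subset := subset_univ _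

namespace IsPowerExtension

variable {α : ℝ} {I : Set ℝ} {f : ℝ → ℝ}

lemma zero_mem (hf : IsPowerExtension α I f) : (0 : ℝ) ∈ I := hf.nonneg_subset self_mem_Ici

lemma map_nonneg (hf : IsPowerExtension α I f) {x : ℝ} (hx : 0 ≤ x) : 0 ≤ f x := by
  rcases hx.eq_or_lt with rfl | hx
  · exact hf.map_zero.ge
  · exact hf.map_pos x hx ▸ Real.rpow_nonneg hx.le α

lemma eq_zero_of_map_eq_zero (hf : IsPowerExtension α I f) {x : ℝ} (hx : 0 ≤ x) (h : f x = 0) :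
    x = 0 := by
  by_contra hne
  have hpos : 0 < x := hx.lt_of_ne' hne
  exact (Real.rpow_pos_of_pos hpos α).ne' (hf.map_pos x hpos ▸ h)

lemma map_eq_rpow (hf : IsPowerExtension α I f) (hα : α ≠ 0) {x : ℝ} (hx : 0 ≤ x) :
    f x = x ^ α := by
  rcases hx.eq_or_lt with rfl | hx
  · rw [hf.map_zero, Real.zero_rpow hα]
  · exact hf.map_pos x hx

lemma map_sq_eq_rpow (hf : IsPowerExtension α I f) (hα : α ≠ 0) {x : ℝ} (hx : x ∈ I) :
    f x ^ 2 = (x ^ 2) ^ α := by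
  rw [← sq_abs (f x), hf.abs_map x hx, hf.map_eq_rpow hα (abs_nonneg x), ← sq_abs x,
    Real.rpow_pow_comm (abs_nonneg x)]

lemma map_schur_le (hf : IsPowerExtension α I f) (hα : 1 ≤ α) {a b c : ℝ} (ha : 0 ≤ a)
    (hb : b ∈ I) (hc : 0 ≤ c - a⁻¹ * b ^ 2) :
    f (c - a⁻¹ * b ^ 2) ≤ f c - (f a)⁻¹ * f b ^ 2 := by
  have hα₀ : α ≠ 0 := by positivity
  have hq : 0 ≤ a⁻¹ * b ^ 2 := by positivity
  have hsuper := Real.add_rpow_le_rpow_add hc hq hα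
  rw [sub_add_cancel, Real.mul_rpow (inv_nonneg.2 ha) (sq_nonneg b), Real.inv_rpow ha] at hsuper
  rw [hf.map_sq_eq_rpow hα₀ hb, hf.map_eq_rpow hα₀ hc, hf.map_eq_rpow hα₀ ha,
    hf.map_eq_rpow hα₀ (sub_nonneg.1 hc |>.trans' hq)]
  exact le_sub_iff_add_le.2 hsuper

end IsPowerExtension

section Leaf

variable {V : Type*} {α : ℝ} {I : Set ℝ} {f : ℝ → ℝ} {A : Matrix V V ℝ} {v : V}

lemma posSemidef_map_of_leaf [Finite V] (hf : IsPowerExtension α I f) (hα : 1 ≤ α)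
    (hA : A.PosSemidef) (hI : ∀ i, A v i ∈ I) (hleaf : {w | w ≠ v ∧ A v w ≠ 0}.Subsingleton)
    (hC : ((schurComplementAt A v).map f).PosSemidef) : (A.map f).PosSemidef := by
  classical
  have hsymm : A.IsSymm := isHermitian_iff_isSymm.1 hA.isHermitian
  have hfsymm : (A.map f).IsSymm := hsymm.map f
  have hfrow (h : (A.map f) v v = 0) : (A.map f) v = 0 := by
    have hrow := row_eq_zero_of_posSemidef hA (hf.eq_zero_of_map_eq_zero hA.diag_nonneg h)
    ext j
    simp [hrow, hf.map_zero]
  have hfleaf : {w | w ≠ v ∧ (A.map f) v w ≠ 0}.Subsingleton := hleaf.anti fun w hw =>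
    ⟨hw.1, fun h => hw.2 (by rw [map_apply, h, hf.map_zero])⟩
  set d : V → ℝ := fun w =>
    schurComplementAt (A.map f) v w w - f (schurComplementAt A v w w) with hd
  have hd_nonneg : 0 ≤ d := fun w => by
    have hdiag : 0 ≤ schurComplementAt A v w w := (posSemidef_schurComplementAt hA v).diag_nonneg
    simp only [hd, schurComplementAt_apply, map_apply, ← hsymm.apply w v, ← sq] at hdiag ⊢
    exact sub_nonneg.2 (hf.map_schur_le hα hA.diag_nonneg (hI w) hdiag)
  have hdecomp : schurComplementAt (A.map f) v = (schurComplementAt A v).map f + diagonal d := by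
    ext i j
    rcases eq_or_ne i j with rfl | hij
    · simp [d]
    · rw [Matrix.add_apply, diagonal_apply_ne _ hij, add_zero, map_apply,
        schurComplementAt_apply_of_leaf hfsymm hfrow hfleaf hij,
        schurComplementAt_apply_of_leaf hsymm (row_eq_zero_of_posSemidef hA) hleaf hij, apply_ite f,
        hf.map_zero, map_apply]
  refine posSemidef_of_schurComplementAt (isHermitian_iff_isSymm.2 hfsymm)
    (hf.map_nonneg hA.diag_nonneg) (hdecomp ▸ hC.add (.diagonal hd_nonneg))

variable [Fintype V] {G : SimpleGraph V}

lemma schurComplementAt_mem_PsetG (hI : Ici 0 ⊆ I) (hA : A ∈ PsetG G I)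
    (hleaf : {w | w ≠ v ∧ A v w ≠ 0}.Subsingleton) : schurComplementAt A v ∈ PsetG G I := by
  classical
  have hC := posSemidef_schurComplementAt hA.1 v
  have hsymm : A.IsSymm := isHermitian_iff_isSymm.1 hA.1.isHermitian
  have hoff {i j : V} (hij : i ≠ j) :=
    schurComplementAt_apply_of_leaf hsymm (row_eq_zero_of_posSemidef hA.1) hleaf hij
  refine ⟨hC, fun i j => ?_, fun i j hij hadj => ?_⟩
  · rcases eq_or_ne i j with rfl | hij
    · exact hI hC.diag_nonneg
    · rw [hoff hij]
      split_ifs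
      exacts [hI self_mem_Ici, hA.2.1 i j]
  · rw [hoff hij, hA.2.2 i j hij hadj, ite_self]

/-- `f[-]` preserves positivity on the matrices of `P_G(I)` supported on `S × S`. By symmetry it is
enough that the rows outside `S` vanish. -/
def PreservesOn (f : ℝ → ℝ) (I : Set ℝ) (G : SimpleGraph V) (S : Set V) : Prop :=
  ∀ A ∈ PsetG G I, (∀ i ∉ S, A i = 0) → (A.map f).PosSemidef

protected lemma PreservesOn.insert (hf : IsPowerExtension α I f) (hα : 1 ≤ α) {S : Set V}
    (hS : PreservesOn f I G S) (hv : {w ∈ S | G.Adj v w}.Subsingleton) :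
    PreservesOn f I G (insert v S) := by
  intro A hA hsupp
  have hsymm : A.IsSymm := isHermitian_iff_isSymm.1 hA.1.isHermitian
  have hleaf : {w | w ≠ v ∧ A v w ≠ 0}.Subsingleton := by
    refine hv.anti fun w ⟨hwv, hw⟩ => ⟨?_, ?_⟩
    · by_contra hwS
      exact hw (by rw [← hsymm.apply, hsupp w (by simp [hwv, hwS]), Pi.zero_apply])
    · by_contra hadj
      exact hw (hA.2.2 v w hwv.symm hadj)
  refine posSemidef_map_of_leaf hf hα hA.1 (hA.2.1 v) hleaf <|
    hS _ (schurComplementAt_mem_PsetG hf.nonneg_subset hA hleaf) fun i hi => ?_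
  rcases eq_or_ne i v with rfl | hiv
  · exact schurComplementAt_pivot_row (row_eq_zero_of_posSemidef hA.1)
  · ext j
    simp [schurComplementAt_apply, hsupp i (by simp [hiv, hi])]

end Leaf

section Forest

variable {V : Type*} [Fintype V] {α : ℝ} {I : Set ℝ} {f : ℝ → ℝ} {G : SimpleGraph V}

lemma preservesOn_univ_of_forest (hf : IsPowerExtension α I f) (hα : 1 ≤ α) {F : SimpleGraph V}
    (hF : F.IsAcyclic) {R : Set V} (hR : R.Pairwise fun a b => ¬ F.Reachable a b)
    (hFG : ∀ v ∉ R, ∀ w, G.Adj v w → F.Adj v w) (h : PreservesOn f I G R) :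
    PreservesOn f I G univ :=
  forest_induction hF hR h fun _ v hRS hv hleaf hS => hS.insert hf hα <|
    hleaf.anti fun w hw => ⟨hw.1, hFG v (fun hvR => hv (hRS hvR)) w hw.2⟩

lemma preservesOn_univ_iff :
    PreservesOn f I G univ ↔ ∀ A ∈ PsetG G I, (A.map f).PosSemidef := by
  simp [PreservesOn]

lemma preservesOn_empty (hf : f 0 = 0) : PreservesOn f I G ∅ := by
  intro A _ hsupp
  obtain rfl : A = 0 := funext fun i => hsupp i (notMem_empty i)
  rw [Matrix.map_zero _ hf]
  exact .zero

lemma preservesOn_univ_of_isAcyclic (hf : IsPowerExtension α I f) (hα : 1 ≤ α)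
    (hG : G.IsAcyclic) : PreservesOn f I G univ :=
  preservesOn_univ_of_forest hf hα hG (pairwise_empty _) (fun _ _ _ h => h)
    (preservesOn_empty hf.map_zero)

end Forest

section ZeroExtend

variable {m n : Type*} [Fintype m]

/-- The matrix on `n` whose block along the embedding `e : m ↪ n` is `A` and whose other entries
vanish. It is encoded as a congruence by a `0`-`1` matrix, so that positivity is inherited. -/
def zeroExtend {R : Type*} [Semiring R] (e : m ↪ n) (A : Matrix m m R) : Matrix n n R :=
  open Classical in
  (1 : Matrix n n R).submatrix id e * A * (1 : Matrix n n R).submatrix e id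

variable {R : Type*} [Semiring R] (e : m ↪ n) (A : Matrix m m R)

lemma zeroExtend_submatrix_self : (zeroExtend e A).submatrix e e = A := by
  classical
  rw [zeroExtend, submatrix_mul _ _ e id e Function.bijective_id]
  simp [submatrix_mul _ _ e id id Function.bijective_id]

lemma zeroExtend_row_eq_zero {i : n} (hi : i ∉ range e) : zeroExtend e A i = 0 := by
  have hne (a : m) : i ≠ e a := fun h => hi ⟨a, h.symm⟩
  ext j
  simp [zeroExtend, mul_apply, one_apply, hne]

lemma zeroExtend_apply_eq_zero {j : n} (hj : j ∉ range e) (i : n) : zeroExtend e A i j = 0 := by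
  have hne (a : m) : e a ≠ j := fun h => hj ⟨a, h⟩
  simp [zeroExtend, mul_apply, one_apply, hne]

variable {e} in
lemma zeroExtend_submatrix {B : Matrix n n R} (hrow : ∀ i ∉ range e, B i = 0)
    (hcol : ∀ j ∉ range e, ∀ i, B i j = 0) : zeroExtend e (B.submatrix e e) = B := by
  ext i j
  by_cases hi : i ∈ range e
  · by_cases hj : j ∈ range e
    · obtain ⟨⟨a, rfl⟩, b, rfl⟩ := And.intro hi hj
      exact congrFun₂ (zeroExtend_submatrix_self e (B.submatrix e e)) a b
    · rw [zeroExtend_apply_eq_zero e _ hj, hcol j hj]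
  · rw [zeroExtend_row_eq_zero e _ hi, hrow i hi]

lemma posSemidef_zeroExtend {𝕜 : Type*} [RCLike 𝕜] [Finite n] {A : Matrix m m 𝕜}
    (hA : A.PosSemidef) : (zeroExtend e A).PosSemidef := by
  classical
  have := Fintype.ofFinite n
  have hP : ((1 : Matrix n n 𝕜).submatrix id e)ᴴ = (1 : Matrix n n 𝕜).submatrix e id := by
    rw [conjTranspose_submatrix, conjTranspose_one]
  convert hA.mul_mul_conjTranspose_same ((1 : Matrix n n 𝕜).submatrix id e)
  rw [zeroExtend, hP]

end ZeroExtend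

section Induced

variable {V V' : Type*} [Fintype V] [Fintype V'] {α : ℝ} {I : Set ℝ} {f : ℝ → ℝ}
  {G : SimpleGraph V}

lemma zeroExtend_mem_PsetG (e : V' ↪ V) (hI : 0 ∈ I) {A : Matrix V' V' ℝ}
    (hA : A ∈ PsetG (G.comap e) I) : zeroExtend e A ∈ PsetG G I := by
  have hcases (i j : V) :
      zeroExtend e A i j = 0 ∨ ∃ a b, i = e a ∧ j = e b ∧ zeroExtend e A i j = A a b := by
    by_cases hi : i ∈ range e
    · by_cases hj : j ∈ range e
      · obtain ⟨⟨a, rfl⟩, b, rfl⟩ := And.intro hi hj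
        exact .inr ⟨a, b, rfl, rfl, congrFun₂ (zeroExtend_submatrix_self e A) a b⟩
      · exact .inl (zeroExtend_apply_eq_zero e A hj i)
    · exact .inl (congrFun (zeroExtend_row_eq_zero e A hi) j)
  refine ⟨posSemidef_zeroExtend e hA.1, fun i j => ?_, fun i j hij hadj => ?_⟩
  · obtain h | ⟨a, b, -, -, h⟩ := hcases i j
    exacts [h ▸ hI, h ▸ hA.2.1 a b]
  · obtain h | ⟨a, b, rfl, rfl, h⟩ := hcases i j
    exacts [h, h.trans (hA.2.2 a b (ne_of_apply_ne e hij) hadj)]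

lemma submatrix_mem_PsetG (e : V' ↪ V) {A : Matrix V V ℝ} (hA : A ∈ PsetG G I) :
    A.submatrix e e ∈ PsetG (G.comap e) I :=
  ⟨hA.1.submatrix e, fun a b => hA.2.1 (e a) (e b),
    fun a b hab hadj => hA.2.2 (e a) (e b) (e.injective.ne hab) hadj⟩

lemma preservesOn_range_iff (hf : f 0 = 0) (hI : 0 ∈ I) (e : V' ↪ V) :
    PreservesOn f I G (range e) ↔ PreservesOn f I (G.comap e) univ := by
  refine ⟨fun h A hA _ => ?_, fun h A hA hrow => ?_⟩
  · have hext := h _ (zeroExtend_mem_PsetG e hI hA) fun i hi => zeroExtend_row_eq_zero e A hi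
    have hsub := hext.submatrix e
    rwa [submatrix_map, zeroExtend_submatrix_self] at hsub
  · have hsymm : A.IsSymm := isHermitian_iff_isSymm.1 hA.1.isHermitian
    have hcol (j : V) (hj : j ∉ range e) (i : V) : A i j = 0 := by
      rw [← hsymm.apply, hrow j hj, Pi.zero_apply]
    have hmap : zeroExtend e ((A.map f).submatrix e e) = A.map f := by
      refine zeroExtend_submatrix (fun i hi => ?_) fun j hj i => ?_
      · ext j
        simp [hrow i hi, hf]
      · simp [hcol j hj, hf]
    rw [← hmap]
    exact posSemidef_zeroExtend e (preservesOn_univ_iff.1 h _ (submatrix_mem_PsetG e hA))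

lemma PreservesOn.comap (hf : f 0 = 0) (hI : 0 ∈ I) (h : PreservesOn f I G univ) (e : V' ↪ V) :
    PreservesOn f I (G.comap e) univ :=
  (preservesOn_range_iff hf hI e).1 fun A hA _ => preservesOn_univ_iff.1 h A hA

lemma posSemidef_path_matrix_iff {c : ℝ} :
    !![c, 1, 1; 1, 1, 0; 1, 0, 1].PosSemidef ↔ 2 ≤ c := by
  refine ⟨fun h => ?_, fun hc => ?_⟩
  · have hquad : star ![1, -1, -1] ⬝ᵥ (!![c, 1, 1; 1, 1, 0; 1, 0, 1] *ᵥ ![1, -1, -1]) = c - 2 := by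
      simp [vecHead, vecTail]
      ring
    exact sub_nonneg.1 (hquad ▸ h.dotProduct_mulVec_nonneg _)
  · have hsum : !![c, 1, 1; 1, 1, 0; 1, 0, 1] = diagonal ![c - 2, 0, 0] +
        vecMulVec ![1, 1, 0] (star ![1, 1, 0]) + vecMulVec ![1, 0, 1] (star ![1, 0, 1]) := by
      ext i j
      fin_cases i <;> fin_cases j <;> simp [vecMulVec]
      ring
    have hdiag : 0 ≤ ![c - 2, 0, 0] := by
      intro i
      fin_cases i <;> simp [hc]
    rw [hsum]
    exact ((PosSemidef.diagonal hdiag).add (posSemidef_vecMulVec_self_star _)).add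
      (posSemidef_vecMulVec_self_star _)

lemma one_le_of_preservesOn (hf : IsPowerExtension α I f) (h : PreservesOn f I G univ)
    (hG : ∃ x y z, G.Adj x y ∧ G.Adj x z ∧ y ≠ z) : 1 ≤ α := by
  obtain ⟨x, y, z, hxy, hxz, hyz⟩ := hG
  have hinj : Function.Injective ![x, y, z] := by
    intro i j
    fin_cases i <;> fin_cases j <;> simp [hxy.ne, hxz.ne, hxy.ne', hxz.ne', hyz, hyz.symm]
  let e : Fin 3 ↪ V := ⟨![x, y, z], hinj⟩
  let A : ℝ → Matrix (Fin 3) (Fin 3) ℝ := fun c => !![c, 1, 1; 1, 1, 0; 1, 0, 1]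
  have hA : A 2 ∈ PsetG (G.comap e) I := by
    refine ⟨posSemidef_path_matrix_iff.2 le_rfl, fun i j => hf.nonneg_subset ?_, fun i j => ?_⟩
    · fin_cases i <;> fin_cases j <;> simp [A]
    · change i ≠ j → ¬ G.Adj (![x, y, z] i) (![x, y, z] j) → A 2 i j = 0
      fin_cases i <;> fin_cases j <;> simp [A, hxy, hxz, hxy.symm, hxz.symm]
  have hmap : (A 2).map f = A (2 ^ α) := by
    ext i j
    fin_cases i <;> fin_cases j <;> simp [A, hf.map_zero, hf.map_pos]
  have hpos := preservesOn_univ_iff.1 (h.comap hf.map_zero hf.zero_mem e) _ hA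
  rw [hmap, posSemidef_path_matrix_iff] at hpos
  exact (Real.rpow_le_rpow_left_iff one_lt_two).1 ((Real.rpow_one 2).trans_le hpos)

end Induced

section PreservingExponents

variable {V : Type*} [Fintype V] {I : Set ℝ} {f : ℝ → ℝ → ℝ} {G : SimpleGraph V} {α : ℝ}

/-- The exponents `α` for which `f α [-]` maps `P_G(I)` to `P_G(ℝ)`. The sets `H_G`, `H_G^ψ` and
`H_G^φ` are the instances `powEnt` on `[0, ∞)`, `psiF` on `ℝ` and `phiF` on `ℝ`. -/
def preservingExponents (f : ℝ → ℝ → ℝ) (I : Set ℝ) (G : SimpleGraph V) : Set ℝ :=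
  {α | ∀ A ∈ PsetG G I, A.map (f α) ∈ PsetG G univ}

lemma mem_preservingExponents_iff (hf : f α 0 = 0) :
    α ∈ preservingExponents f I G ↔ PreservesOn (f α) I G univ := by
  rw [preservesOn_univ_iff]
  refine ⟨fun h A hA => (h A hA).1, fun h A hA =>
    ⟨h A hA, fun _ _ => mem_univ _, fun i j hij hadj => ?_⟩⟩
  rw [map_apply, hA.2.2 i j hij hadj, hf]

lemma preservingExponents_comap_eq {V' : Type*} [Fintype V']
    (hf : ∀ α, IsPowerExtension α I (f α)) (e : V' ↪ V) {F : SimpleGraph V} (hF : F.IsAcyclic)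
    (hR : (range e).Pairwise fun a b => ¬ F.Reachable a b)
    (hFG : ∀ v ∉ range e, ∀ w, G.Adj v w → F.Adj v w)
    (hne : ∃ x y z, (G.comap e).Adj x y ∧ (G.comap e).Adj x z ∧ y ≠ z) :
    preservingExponents f I (G.comap e) = preservingExponents f I G := by
  ext α
  rw [mem_preservingExponents_iff (hf α).map_zero, mem_preservingExponents_iff (hf α).map_zero]
  refine ⟨fun h => ?_, fun h => h.comap (hf α).map_zero (hf α).zero_mem e⟩
  exact preservesOn_univ_of_forest (hf α) (one_le_of_preservesOn (hf α) h hne) hF hR hFG <|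
    (preservesOn_range_iff (hf α).map_zero (hf α).zero_mem e).2 h

lemma preservingExponents_of_isAcyclic (hf : ∀ α, IsPowerExtension α I (f α)) (hG : G.IsAcyclic)
    (hne : ∃ x y z, G.Adj x y ∧ G.Adj x z ∧ y ≠ z) : preservingExponents f I G = Ici 1 := by
  ext α
  rw [mem_preservingExponents_iff (hf α).map_zero]
  exact ⟨fun h => one_le_of_preservesOn (hf α) h hne,
    fun hα => preservesOn_univ_of_isAcyclic (hf α) hα hG⟩

lemma isLeast_CEset_Ici (a : ℝ) : IsLeast (CEset (Ici a)) a :=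
  ⟨fun _ h => h, fun b h => h b le_rfl⟩

end PreservingExponents

theorem Hsets_attach_trees_general {V' W : Type*} [Fintype V'] [Fintype W]
    (G' : SimpleGraph V') (G : SimpleGraph (V' ⊕ W))
    (hne : ∃ x y z, G'.Adj x y ∧ G'.Adj x z ∧ y ≠ z)
    (hind : ∀ a b : V', G.Adj (Sum.inl a) (Sum.inl b) ↔ G'.Adj a b)
    (F : SimpleGraph (V' ⊕ W))
    (hF : ∀ x y, F.Adj x y ↔ (G.Adj x y ∧ ¬ ∃ a b : V', x = Sum.inl a ∧ y = Sum.inl b))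
    (hforest : F.IsAcyclic)
    (hroots : ∀ a b : V', F.Reachable (Sum.inl a) (Sum.inl b) → a = b) :
    (HsetG G = HsetG G' ∧ HsetPsi G = HsetPsi G' ∧ HsetPhi G = HsetPhi G') ∧
    (∀ (U : Type*) (_ : Fintype U) (T : SimpleGraph U), T.IsAcyclic →
      (∃ x y z, T.Adj x y ∧ T.Adj x z ∧ y ≠ z) →
      IsLeast (CEset (HsetG T)) 1 ∧ IsLeast (CEset (HsetPsi T)) 1 ∧
      IsLeast (CEset (HsetPhi T)) 1) := by
  constructor
  · obtain rfl : G.comap (Function.Embedding.inl : V' ↪ V' ⊕ W) = G' := by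
      ext a b
      exact hind a b
    have hR : (range (Function.Embedding.inl : V' ↪ V' ⊕ W)).Pairwise
        fun a b => ¬ F.Reachable a b := by
      rintro _ ⟨a, rfl⟩ _ ⟨b, rfl⟩ hab h
      exact hab (congrArg Sum.inl (hroots a b h))
    have hFG : ∀ v ∉ range (Function.Embedding.inl : V' ↪ V' ⊕ W), ∀ w, G.Adj v w → F.Adj v w :=
      fun v hv w hvw => (hF v w).2 ⟨hvw, fun ⟨a, _, ha, _⟩ => hv ⟨a, ha.symm⟩⟩
    have attach {f : ℝ → ℝ → ℝ} {I : Set ℝ} (hf : ∀ α, IsPowerExtension α I (f α)) :=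
      (preservingExponents_comap_eq hf .inl hforest hR hFG hne).symm
    exact ⟨attach isPowerExtension_powEnt, attach isPowerExtension_psiF,
      attach isPowerExtension_phiF⟩
  · intro U _ T hT hTne
    have critical {f : ℝ → ℝ → ℝ} {I : Set ℝ} (hf : ∀ α, IsPowerExtension α I (f α)) :
        IsLeast (CEset (preservingExponents f I T)) 1 :=
      preservingExponents_of_isAcyclic hf hT hTne ▸ isLeast_CEset_Ici 1
    exact ⟨critical isPowerExtension_powEnt, critical isPowerExtension_psiF,
      critical isPowerExtension_phiF⟩

/-- **Theorem 2.2**: if `G` is obtained from `G'` (not a disjoint union of copies of `K_2`,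
i.e. some vertex has two distinct neighbors) by attaching finitely many trees to its vertices
(at least one attached tree having an edge), then the `H`-sets of `G` and `G'` coincide.
Here `G` lives on `V' ⊕ W`, restricts to `G'` on `V'`, and the graph `F` consisting of the
edges of `G` not joining two vertices of `V'` is a forest each of whose connected components
contains exactly one vertex of `V'` (the attachment root of the corresponding trees).
In particular, any tree with at least `3` vertices has all three critical exponents equal
to `1`. -/
theorem Hsets_attach_trees {V' W : Type} [Fintype V'] [Fintype W]
    [DecidableEq V'] [DecidableEq W]
    (G' : SimpleGraph V') (G : SimpleGraph (V' ⊕ W))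
    (hne : ¬ ∀ ⦃x y z : V'⦄, G'.Adj x y → G'.Adj x z → y = z)
    (hind : ∀ a b : V', G.Adj (Sum.inl a) (Sum.inl b) ↔ G'.Adj a b)
    (F : SimpleGraph (V' ⊕ W))
    (hF : ∀ x y, F.Adj x y ↔ (G.Adj x y ∧ ¬ ∃ a b : V', x = Sum.inl a ∧ y = Sum.inl b))
    (hforest : F.IsAcyclic)
    (hcomp : ∀ x : V' ⊕ W, ∃! a : V', F.Reachable x (Sum.inl a))
    (hedge : ∃ x y, F.Adj x y) :
    (HsetG G = HsetG G' ∧ HsetPsi G = HsetPsi G' ∧ HsetPhi G = HsetPhi G') ∧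
    (∀ (U : Type) (_ : Fintype U) (T : SimpleGraph U), T.Connected → T.IsAcyclic →
      3 ≤ Fintype.card U →
      IsLeast (CEset (HsetG T)) 1 ∧ IsLeast (CEset (HsetPsi T)) 1 ∧
      IsLeast (CEset (HsetPhi T)) 1) := by
  obtain ⟨hattach, hcritical⟩ := Hsets_attach_trees_general G' G
    (by simpa only [not_forall, exists_prop] using hne) hind F hF hforest
    fun a b hab => (hcomp (Sum.inl a)).unique .rfl hab
  exact ⟨hattach, fun U _ T hT hTacyc hcard => hcritical U _ T hTacyc <|
    exists_adj_adj_ne_of_three_le_card hT.preconnected hcard⟩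
end
end

section
/- Let G = (V,E) be a finite simple graph with a decomposition (A,C,B), and let f : ℝ → ℝ with f(0) = 0. If f[−] preserves positivity on P_{G_{A∪C}} and on P_{G_{B∪C}}, and f[−] is Loewner super-additive on P_{G_C}(ℝ), then f[−] preserves positivity on P_G. -/
open Set Matrix

noncomputable section

/-- A decomposition `(A,C,B)` of a graph `G`: a partition of the vertices such that `C`
separates `A` from `B` (every walk from `A` to `B` meets `C`) and `C` induces a complete
subgraph. -/
def IsDecomposition {V : Type*} (G : SimpleGraph V) (A C B : Set V) : Prop :=
  (∀ v, v ∈ A ∨ v ∈ C ∨ v ∈ B) ∧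
  Disjoint A C ∧ Disjoint A B ∧ Disjoint C B ∧
  (∀ a ∈ A, ∀ b ∈ B, ∀ p : G.Walk a b, ∃ c ∈ C, c ∈ p.support) ∧
  (∀ c₁ ∈ C, ∀ c₂ ∈ C, c₁ ≠ c₂ → G.Adj c₁ c₂)

/-- `P_{G_S}` for a subset `S` of the vertices, identified with full-size matrices by padding
with zeros: positive semidefinite matrices supported on `S × S` whose zero pattern respects
the (induced subgraph of the) graph `G`. -/
def PsetSub {V : Type*} [Fintype V] (G : SimpleGraph V) (S : Set V) :
    Set (Matrix V V ℝ) :=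
  {M | M.PosSemidef ∧ (∀ i j, (i ∉ S ∨ j ∉ S) → M i j = 0) ∧
    ∀ i j, i ≠ j → ¬ G.Adj i j → M i j = 0}

/-!
The separation hypothesis makes the `A × B` block of `M ∈ P_G` vanish. Write `M` as the Gram matrix
of vectors `vᵢ`, so that `span {vₐ : a ∈ A}` is orthogonal to every `v_b` with `b ∈ B`, and project
onto this span and onto its orthogonal complement: `M` becomes `M₁ + M₂` with `M₁` supported on
`A ∪ C` and `M₂` on `B ∪ C`. Outside `C × C` at most one summand is nonzero at each entry; as the
clique `C` contains no non-edge, both inherit the zero pattern of `G`. As `f 0 = 0`, the matrix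
`f[M₁ + M₂] - f[M₁] - f[M₂]` also lives on `C × C`, where it is the super-additivity defect of the
`C`-blocks of `M₁` and `M₂`.
-/

section Support

variable {n R : Type*}

/-- `M` vanishes outside the block `S × S`, as a matrix indexed by `S` does once it is padded with
zeros. -/
def IsSupportedOn [Zero R] (M : Matrix n n R) (S : Set n) : Prop :=
  ∀ i j, i ∉ S ∨ j ∉ S → M i j = 0

open Classical in
/-- The principal block of `M` on `S`, padded with zeros to a matrix of the original size. -/
def paddedBlock [Zero R] (S : Set n) (M : Matrix n n R) : Matrix n n R :=
  of fun i j ↦ if i ∈ S ∧ j ∈ S then M i j else 0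

theorem paddedBlock_apply_of_mem [Zero R] {S : Set n} (M : Matrix n n R) {i j : n} (hi : i ∈ S)
    (hj : j ∈ S) : paddedBlock S M i j = M i j :=
  if_pos ⟨hi, hj⟩

theorem paddedBlock_apply_of_notMem [Zero R] {S : Set n} (M : Matrix n n R) {i j : n}
    (h : ¬(i ∈ S ∧ j ∈ S)) : paddedBlock S M i j = 0 :=
  if_neg h

theorem isSupportedOn_paddedBlock [Zero R] (S : Set n) (M : Matrix n n R) :
    IsSupportedOn (paddedBlock S M) S :=
  fun _ _ h ↦ paddedBlock_apply_of_notMem M (not_and_or.mpr h)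

theorem paddedBlock_apply_eq_zero [Zero R] (S : Set n) {M : Matrix n n R} {i j : n}
    (h : M i j = 0) : paddedBlock S M i j = 0 := by
  classical
  exact ite_eq_right_iff.mpr fun _ ↦ h

namespace IsSupportedOn

variable {S₁ S₂ : Set n} {M₁ M₂ : Matrix n n R} {i j : n}

theorem apply_eq_zero_or_apply_eq_zero [Zero R] (h₁ : IsSupportedOn M₁ S₁)
    (h₂ : IsSupportedOn M₂ S₂) (hij : ¬(i ∈ S₁ ∩ S₂ ∧ j ∈ S₁ ∩ S₂)) :
    M₁ i j = 0 ∨ M₂ i j = 0 := by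
  by_cases h : i ∈ S₁ ∧ j ∈ S₁
  · exact .inr (h₂ i j (not_and_or.mp fun h' ↦ hij ⟨⟨h.1, h'.1⟩, h.2, h'.2⟩))
  · exact .inl (h₁ i j (not_and_or.mp h))

theorem apply_eq_zero_and_apply_eq_zero_of_add [AddZeroClass R] (h₁ : IsSupportedOn M₁ S₁)
    (h₂ : IsSupportedOn M₂ S₂) (hij : ¬(i ∈ S₁ ∩ S₂ ∧ j ∈ S₁ ∩ S₂)) (hadd : (M₁ + M₂) i j = 0) :
    M₁ i j = 0 ∧ M₂ i j = 0 := by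
  rw [Matrix.add_apply] at hadd
  rcases h₁.apply_eq_zero_or_apply_eq_zero h₂ hij with h | h
  · exact ⟨h, by rwa [h, zero_add] at hadd⟩
  · exact ⟨by rwa [h, add_zero] at hadd, h⟩

theorem map_add_eq {R' : Type*} [AddZeroClass R] [AddCommGroup R'] {f : R → R'} (hf : f 0 = 0)
    (h₁ : IsSupportedOn M₁ S₁) (h₂ : IsSupportedOn M₂ S₂) :
    (M₁ + M₂).map f = M₁.map f + M₂.map f +
      ((paddedBlock (S₁ ∩ S₂) M₁ + paddedBlock (S₁ ∩ S₂) M₂).map f -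
        (paddedBlock (S₁ ∩ S₂) M₁).map f - (paddedBlock (S₁ ∩ S₂) M₂).map f) := by
  ext i j
  simp only [Matrix.add_apply, Matrix.sub_apply, map_apply]
  by_cases hij : i ∈ S₁ ∩ S₂ ∧ j ∈ S₁ ∩ S₂
  · simp only [paddedBlock_apply_of_mem _ hij.1 hij.2]
    abel
  · simp only [paddedBlock_apply_of_notMem _ hij, add_zero, hf, sub_zero]
    rcases h₁.apply_eq_zero_or_apply_eq_zero h₂ hij with h | h <;>
      simp only [h, hf, zero_add, add_zero]

end IsSupportedOn

theorem posSemidef_paddedBlock [Finite n] [Ring R] [PartialOrder R] [StarRing R]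
    {M : Matrix n n R} (hM : M.PosSemidef) (S : Set n) : (paddedBlock S M).PosSemidef := by
  classical
  have := Fintype.ofFinite n
  let D : Matrix n n R := diagonal (S.indicator 1)
  suffices h : paddedBlock S M = D * M * Dᴴ from h ▸ hM.mul_mul_conjTranspose_same D
  ext i j
  by_cases hi : i ∈ S <;> by_cases hj : j ∈ S <;>
    simp [D, paddedBlock, diagonal_conjTranspose, hi, hj]

end Support

section Gram

open scoped ComplexOrder

variable {𝕜 n E : Type*} [RCLike 𝕜] [NormedAddCommGroup E] [InnerProductSpace 𝕜 E]

theorem exists_gram_eq_of_posSemidef [Finite n] {M : Matrix n n 𝕜} (hM : M.PosSemidef) :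
    ∃ (m : ℕ) (v : n → EuclideanSpace 𝕜 (Fin m)), gram 𝕜 v = M := by
  obtain ⟨m, u, rfl⟩ := posSemidef_iff_eq_sum_vecMulVec.mp hM
  refine ⟨m, fun i ↦ WithLp.toLp 2 fun k ↦ star (u k i), ?_⟩
  ext i j
  simp [Matrix.sum_apply, vecMulVec_apply, PiLp.inner_apply, mul_comm]

theorem isSupportedOn_gram {v : n → E} {S : Set n} (hv : ∀ i ∉ S, v i = 0) :
    IsSupportedOn (gram 𝕜 v) S := by
  rintro i j (hi | hj)
  · rw [gram_apply, hv i hi, inner_zero_left]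
  · rw [gram_apply, hv j hj, inner_zero_right]

theorem gram_starProjection_add_gram_starProjection_orthogonal (K : Submodule 𝕜 E)
    [K.HasOrthogonalProjection] (v : n → E) :
    gram 𝕜 (K.starProjection ∘ v) + gram 𝕜 (Kᗮ.starProjection ∘ v) = gram 𝕜 v := by
  ext i j
  calc inner 𝕜 (K.starProjection (v i)) (K.starProjection (v j)) +
        inner 𝕜 (Kᗮ.starProjection (v i)) (Kᗮ.starProjection (v j))
      = inner 𝕜 (v i) (K.starProjection (v j)) + inner 𝕜 (v i) (Kᗮ.starProjection (v j)) := by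
        simp only [Submodule.inner_starProjection_left_eq_right,
          Submodule.starProjection_eq_self_iff.mpr (Submodule.starProjection_apply_mem _ _)]
    _ = inner 𝕜 (v i) (v j) := by
        rw [← inner_add_right, K.starProjection_add_starProjection_orthogonal]

theorem exists_posSemidef_add_eq_of_block_eq_zero [Finite n] {M : Matrix n n 𝕜}
    (hM : M.PosSemidef) {s t : Set n} (hst : ∀ i ∈ s, ∀ j ∈ t, M i j = 0) :
    ∃ M₁ M₂ : Matrix n n 𝕜, M₁.PosSemidef ∧ M₂.PosSemidef ∧
      IsSupportedOn M₁ tᶜ ∧ IsSupportedOn M₂ sᶜ ∧ M₁ + M₂ = M := by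
  obtain ⟨m, v, rfl⟩ := exists_gram_eq_of_posSemidef hM
  let K := Submodule.span 𝕜 (v '' s)
  have horth : K ⟂ Submodule.span 𝕜 (v '' t) :=
    Submodule.isOrtho_span.mpr <| by
      rintro _ ⟨i, hi, rfl⟩ _ ⟨j, hj, rfl⟩
      exact hst i hi j hj
  have ht : ∀ j ∈ t, K.starProjection (v j) = 0 := fun j hj ↦
    K.starProjection_apply_eq_zero_iff.mpr <|
      horth.symm.le (Submodule.subset_span (mem_image_of_mem v hj))
  have hs : ∀ i ∈ s, Kᗮ.starProjection (v i) = 0 := fun i hi ↦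
    Kᗮ.starProjection_apply_eq_zero_iff.mpr <|
      K.le_orthogonal_orthogonal (Submodule.subset_span (mem_image_of_mem v hi))
  exact ⟨_, _, posSemidef_gram 𝕜 _, posSemidef_gram 𝕜 _,
    isSupportedOn_gram fun j hj ↦ ht j (notMem_compl_iff.mp hj),
    isSupportedOn_gram fun i hi ↦ hs i (notMem_compl_iff.mp hi),
    gram_starProjection_add_gram_starProjection_orthogonal K v⟩

end Gram

namespace IsDecomposition

variable {V : Type*} {G : SimpleGraph V} {A C B : Set V}

theorem not_adj (hdec : IsDecomposition G A C B) {a b : V} (ha : a ∈ A) (hb : b ∈ B) :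
    ¬G.Adj a b := by
  obtain ⟨-, hAC, -, hCB, hsep, -⟩ := hdec
  intro hab
  obtain ⟨c, hc, hmem⟩ := hsep a ha b hb hab.toWalk
  have hends : c = a ∨ c = b := by simpa using hmem
  rcases hends with rfl | rfl
  · exact hAC.notMem_of_mem_left ha hc
  · exact hCB.notMem_of_mem_left hc hb

theorem compl_left (hdec : IsDecomposition G A C B) : Aᶜ = B ∪ C := by
  obtain ⟨hcover, hAC, hAB, -⟩ := hdec
  refine subset_antisymm (fun v hv ↦ ?_) ?_
  · exact ((hcover v).resolve_left hv).symm
  · exact union_subset hAB.subset_compl_left hAC.subset_compl_left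

theorem compl_right (hdec : IsDecomposition G A C B) : Bᶜ = A ∪ C := by
  obtain ⟨hcover, -, hAB, hCB, -⟩ := hdec
  refine subset_antisymm (fun v hv ↦ ?_) ?_
  · exact (or_assoc.mpr (hcover v)).resolve_right hv
  · exact union_subset hAB.subset_compl_right hCB.subset_compl_right

theorem union_inter_union (hdec : IsDecomposition G A C B) : (A ∪ C) ∩ (B ∪ C) = C := by
  obtain ⟨-, -, hAB, -⟩ := hdec
  rw [← inter_union_distrib_right, hAB.inter_eq, empty_union]

theorem exists_mem_psetSub_add_eq [Fintype V] (hdec : IsDecomposition G A C B) {I : Set ℝ}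
    {M : Matrix V V ℝ} (hM : M ∈ PsetG G I) :
    ∃ M₁ ∈ PsetSub G (A ∪ C), ∃ M₂ ∈ PsetSub G (B ∪ C), M₁ + M₂ = M := by
  obtain ⟨hpsd, -, hpattern⟩ := hM
  have hblock : ∀ a ∈ A, ∀ b ∈ B, M a b = 0 := fun a ha b hb ↦
    hpattern a b (hdec.2.2.1.ne_of_mem ha hb) (hdec.not_adj ha hb)
  obtain ⟨M₁, M₂, hpsd₁, hpsd₂, hsupp₁, hsupp₂, rfl⟩ :=
    exists_posSemidef_add_eq_of_block_eq_zero hpsd hblock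
  rw [hdec.compl_right] at hsupp₁
  rw [hdec.compl_left] at hsupp₂
  have hnonedge : ∀ i j, i ≠ j → ¬G.Adj i j → M₁ i j = 0 ∧ M₂ i j = 0 := by
    intro i j hne hadj
    refine hsupp₁.apply_eq_zero_and_apply_eq_zero_of_add hsupp₂ ?_ (hpattern i j hne hadj)
    rw [hdec.union_inter_union]
    obtain ⟨-, -, -, -, -, hclique⟩ := hdec
    exact fun hC ↦ hadj (hclique i hC.1 j hC.2 hne)
  exact ⟨M₁, ⟨hpsd₁, hsupp₁, fun i j hne hadj ↦ (hnonedge i j hne hadj).1⟩,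
    M₂, ⟨hpsd₂, hsupp₂, fun i j hne hadj ↦ (hnonedge i j hne hadj).2⟩, rfl⟩

end IsDecomposition

theorem paddedBlock_mem_psetSub {V : Type*} [Fintype V] {G : SimpleGraph V} {S : Set V}
    {M : Matrix V V ℝ} (hM : M ∈ PsetSub G S) (T : Set V) : paddedBlock T M ∈ PsetSub G T :=
  ⟨posSemidef_paddedBlock hM.1 T, isSupportedOn_paddedBlock T M,
    fun i j hne hadj ↦ paddedBlock_apply_eq_zero T (hM.2.2 i j hne hadj)⟩

/-- **Theorem 3.3(1)**: if `(A,C,B)` is a decomposition of `G`, `f(0) = 0`, `f[−]` preserves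
positivity on `P_{G_{A∪C}}` and on `P_{G_{B∪C}}`, and `f[−]` is Loewner super-additive on
`P_{G_C}(ℝ)`, then `f[−]` preserves positivity on `P_G`. -/
theorem decomposition_preserves_positivity {V : Type*} [Fintype V] (G : SimpleGraph V)
    (A C B : Set V) (hdec : IsDecomposition G A C B)
    (f : ℝ → ℝ) (hf0 : f 0 = 0)
    (h1 : ∀ M ∈ PsetSub G (A ∪ C), (M.map f).PosSemidef)
    (h2 : ∀ M ∈ PsetSub G (B ∪ C), (M.map f).PosSemidef)
    (h3 : ∀ M ∈ PsetSub G C, ∀ N ∈ PsetSub G C,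
      ((M + N).map f - M.map f - N.map f) ∈ PsetSub G C) :
    ∀ M ∈ PsetG G univ, (M.map f).PosSemidef := by
  intro M hM
  obtain ⟨M₁, hM₁, M₂, hM₂, rfl⟩ := hdec.exists_mem_psetSub_add_eq hM
  have hdefect := h3 _ (paddedBlock_mem_psetSub hM₁ C) _ (paddedBlock_mem_psetSub hM₂ C)
  have hsupp₁ : IsSupportedOn M₁ (A ∪ C) := hM₁.2.1
  have hsupp₂ : IsSupportedOn M₂ (B ∪ C) := hM₂.2.1
  rw [hsupp₁.map_add_eq hf0 hsupp₂, hdec.union_inter_union]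
  exact ((h1 M₁ hM₁).add (h2 M₂ hM₂)).add hdefect.1
end
end

section
/- Let G = (V,E) be a finite simple graph with a decomposition (A,C,B), let α ∈ ℝ, and let f = ψ_α or f = φ_α. If f[−] preserves positivity on P_G, then f[−] is Loewner super-additive on P_{G_{C′}}(ℝ) for every subset C′ ⊆ C for which there exist vertices v_1 ∈ A and v_2 ∈ B adjacent to every vertex of C′. -/
open Set Matrix

noncomputable section

/-!
Let `f` be a signed power function with exponent `α`. Differentiating `t ↦ f[M + tN] - f[tN]` along
`[0, 1]` and applying the Schur product theorem shows that `f[-]` is super-additive on `n × n`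
positive semidefinite matrices as soon as `f'[-]` is Loewner monotone there. In the same way `f[-]`
is monotone if `f'[-]` preserves positivity, and the latter follows from monotonicity in dimension
`n - 1`: a positive semidefinite matrix dominates a rank-one matrix agreeing with it on one row and
column. By induction `f[-]` is super-additive for `n ≤ α`.

It remains to see that the size of the clique is at most `α`, unless `f` is a polynomial; in that
case `f` is an integer power and the Schur product theorem applies directly. Bordering
`u uᵀ + v vᵀ` by the two vectors `u` and `v`, placed at the two outer vertices, and taking
a Schur complement shows that `f[-]` is super-additive on pairs of rank-one matrices supported on
the clique. If the clique had at least `m + 1` vertices with `m = ⌊α⌋`, non-polynomiality would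
provide `v` and `w` with `∑ wᵢ vᵢᵏ = 0` for `1 ≤ k ≤ m` and `S = ∑ wᵢ f(vᵢ) ≠ 0`. Testing
super-additivity for `1 1ᵀ` and `ε v vᵀ` against `w`, Taylor expansion of `f` at `1` gives
`ε ^ α S² = O(ε ^ (m + 1))`, a contradiction.
-/

open Filter Topology Asymptotics
open scoped MatrixOrder

section PosSemidef

lemma posSemidef_of_submatrix {R m n : Type*} [CommRing R] [PartialOrder R] [StarRing R]
    [Finite m] [Finite n] {A : Matrix n n R} (e : m ↪ n)
    (hA : ∀ i j, i ∉ range e ∨ j ∉ range e → A i j = 0) (h : (A.submatrix e e).PosSemidef) :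
    A.PosSemidef := by
  classical
  cases nonempty_fintype m
  let E : Matrix n m R := (1 : Matrix n n R).submatrix id e
  have hE : A = E * A.submatrix e e * Eᴴ := by
    ext i j
    by_cases hij : i ∈ range e ∧ j ∈ range e
    · obtain ⟨⟨k, rfl⟩, ⟨l, rfl⟩⟩ := hij
      simp [E, mul_apply, one_apply]
    · have hij' := not_and_or.1 hij
      rw [hA i j hij']
      rcases hij' with hi | hj
      · have hi' (k : m) : i ≠ e k := fun h => hi ⟨k, h.symm⟩
        simp [E, mul_apply, one_apply, hi']
      · have hj' (k : m) : e k ≠ j := fun h => hj ⟨k, h⟩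
        simp [E, mul_apply, one_apply, hj']
  rw [hE]
  exact h.mul_mul_conjTranspose_same E

variable {n : Type*} {A B : Matrix n n ℝ}

lemma le_iff_forall_dotProduct_mulVec_le [Fintype n] (hA : A.IsHermitian) (hB : B.IsHermitian) :
    A ≤ B ↔ ∀ x, x ⬝ᵥ A *ᵥ x ≤ x ⬝ᵥ B *ᵥ x := by
  rw [Matrix.le_iff, posSemidef_iff_dotProduct_mulVec, and_iff_right (hB.sub hA)]
  simp [sub_mulVec]

lemma dotProduct_vecMulVec_mulVec_self [Fintype n] (x z : n → ℝ) :
    x ⬝ᵥ vecMulVec z z *ᵥ x = (x ⬝ᵥ z) ^ 2 := by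
  simp [vecMulVec_mulVec, dotProduct_comm z x, sq]

lemma posSemidef_vecMulVec_self [Finite n] (z : n → ℝ) : (vecMulVec z z).PosSemidef := by
  simpa using posSemidef_vecMulVec_self_star z

lemma sq_dotProduct_mulVec_le [Fintype n] (hA : A.PosSemidef) (x y : n → ℝ) :
    (x ⬝ᵥ A *ᵥ y) ^ 2 ≤ (x ⬝ᵥ A *ᵥ x) * (y ⬝ᵥ A *ᵥ y) := by
  classical
  have hnonneg (z : n → ℝ) : 0 ≤ A.toBilin' z z := by
    simpa [toBilin'_apply'] using hA.dotProduct_mulVec_nonneg z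
  have hsymm : A.toBilin'.IsSymm := isSymm_toBilin'_iff_isSymm.2 (by simpa using hA.isHermitian)
  simpa [toBilin'_apply'] using A.toBilin'.apply_sq_le_of_symm hnonneg ⟨hsymm.eq⟩ x y

lemma exists_vecMulVec_le [Finite n] (hA : A.PosSemidef) (k : n) :
    ∃ z, vecMulVec z z ≤ A ∧ ∀ i, A i k = z i * z k := by
  classical
  cases nonempty_fintype n
  have hcol (x : n → ℝ) : (x ⬝ᵥ A.col k) ^ 2 ≤ (x ⬝ᵥ A *ᵥ x) * A k k := by
    simpa using sq_dotProduct_mulVec_le hA x (Pi.single k 1)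
  have hk : 0 ≤ A k k := hA.diag_nonneg
  refine ⟨(√(A k k))⁻¹ • A.col k, ?_, fun i => ?_⟩
  · refine (le_iff_forall_dotProduct_mulVec_le (posSemidef_vecMulVec_self _).isHermitian
      hA.isHermitian).2 fun x => ?_
    rw [dotProduct_vecMulVec_mulVec_self, dotProduct_smul, smul_eq_mul, mul_pow, inv_pow,
      Real.sq_sqrt hk, inv_mul_eq_div]
    exact div_le_of_le_mul₀ hk (by simpa using hA.dotProduct_mulVec_nonneg x) (hcol x)
  · have hik : A k k = 0 → A i k = 0 := fun h => by simpa [h] using hcol (Pi.single i 1)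
    rcases hk.eq_or_lt with h | h
    · simp [hik h.symm, ← h]
    · simp only [Pi.smul_apply, col_apply, smul_eq_mul]
      field_simp
      rw [Real.sq_sqrt hk]

lemma isClosed_setOf_posSemidef [Finite n] : IsClosed {A : Matrix n n ℝ | A.PosSemidef} := by
  cases nonempty_fintype n
  have h : {A : Matrix n n ℝ | A.PosSemidef} =
      {A | Aᴴ = A} ∩ ⋂ x : n → ℝ, {A | 0 ≤ star x ⬝ᵥ A *ᵥ x} := by
    ext A
    simp [posSemidef_iff_dotProduct_mulVec, IsHermitian]
  rw [h]
  exact (isClosed_eq (by fun_prop) continuous_id).inter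
    (isClosed_iInter fun x => isClosed_le continuous_const (by fun_prop))

lemma le_of_hasDerivAt [Finite n] {Φ Φ' : ℝ → Matrix n n ℝ} {a b : ℝ} (hab : a ≤ b)
    (ha : (Φ a).IsHermitian) (hb : (Φ b).IsHermitian)
    (hd : ∀ t i j, HasDerivAt (fun t => Φ t i j) (Φ' t i j) t)
    (hpos : ∀ t ∈ Ioo a b, (Φ' t).PosSemidef) : Φ a ≤ Φ b := by
  cases nonempty_fintype n
  refine (le_iff_forall_dotProduct_mulVec_le ha hb).2 fun x => ?_
  have hquad (t : ℝ) : HasDerivAt (fun t => x ⬝ᵥ Φ t *ᵥ x) (x ⬝ᵥ Φ' t *ᵥ x) t := by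
    simp only [dotProduct, mulVec]
    exact .fun_sum fun i _ => (HasDerivAt.fun_sum fun j _ => (hd t i j).mul_const _).const_mul _
  have hmono : MonotoneOn (fun t => x ⬝ᵥ Φ t *ᵥ x) (Icc a b) := by
    refine monotoneOn_of_deriv_nonneg (convex_Icc a b)
      (fun t _ => (hquad t).continuousAt.continuousWithinAt)
      (fun t _ => (hquad t).differentiableAt.differentiableWithinAt) fun t ht => ?_
    rw [interior_Icc] at ht
    rw [(hquad t).deriv]
    simpa using (hpos t ht).dotProduct_mulVec_nonneg x
  exact hmono (left_mem_Icc.2 hab) (right_mem_Icc.2 hab) hab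

end PosSemidef

lemma continuous_matrix_map {m n R S : Type*} [TopologicalSpace S] (M : Matrix m n R) :
    Continuous fun f : R → S => M.map f :=
  continuous_matrix fun i j => continuous_apply (M i j)

lemma isClosed_setOf_matrix_le {X n : Type*} [TopologicalSpace X] [Finite n]
    {F G : X → Matrix n n ℝ} (hF : Continuous F) (hG : Continuous G) :
    IsClosed {x | F x ≤ G x} :=
  isClosed_setOf_posSemidef.preimage (hG.sub hF)

section EntrywiseCalculus

variable {n : Type*} {f f' : ℝ → ℝ} {M N : Matrix n n ℝ}

lemma hasDerivAt_map_add_smul (hd : ∀ x, HasDerivAt f (f' x) x) (M N : Matrix n n ℝ)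
    (t : ℝ) (i j : n) :
    HasDerivAt (fun t : ℝ => (M + t • N).map f i j) ((N ⊙ (M + t • N).map f') i j) t := by
  have hline : HasDerivAt (fun t : ℝ => M i j + t * N i j) (N i j) t := by
    simpa using ((hasDerivAt_id t).mul_const (N i j)).const_add (M i j)
  simpa [Function.comp_def, mul_comm] using (hd (M i j + t * N i j)).comp t hline

lemma isHermitian_map (hM : M.IsHermitian) (f : ℝ → ℝ) : (M.map f).IsHermitian :=
  hM.map f fun _ => rfl

variable [Finite n]

lemma map_le_map_of_hasDerivAt (hd : ∀ x, HasDerivAt f (f' x) x)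
    (hpos : ∀ A : Matrix n n ℝ, A.PosSemidef → (A.map f').PosSemidef)
    (hM : M.PosSemidef) (hMN : M ≤ N) : M.map f ≤ N.map f := by
  have hdiff : (N - M).PosSemidef := Matrix.le_iff.1 hMN
  have hN : N.IsHermitian := (hM.nonneg.trans hMN).posSemidef.isHermitian
  have hpath := le_of_hasDerivAt (Φ := fun t => (M + t • (N - M)).map f) zero_le_one
    (by simpa using isHermitian_map hM.isHermitian f) (by simpa using isHermitian_map hN f)
    (hasDerivAt_map_add_smul hd M (N - M))
    fun t ht => hdiff.hadamard (hpos _ (hM.add (hdiff.smul ht.1.le)))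
  simpa using hpath

lemma map_add_map_le_map_add_of_hasDerivAt (h0 : f 0 = 0) (hd : ∀ x, HasDerivAt f (f' x) x)
    (hmono : ∀ A B : Matrix n n ℝ, A.PosSemidef → A ≤ B → A.map f' ≤ B.map f')
    (hM : M.PosSemidef) (hN : N.PosSemidef) : M.map f + N.map f ≤ (M + N).map f := by
  have hmap0 : (0 : Matrix n n ℝ).map f = 0 := Matrix.map_zero f h0
  have hpos (t : ℝ) (ht : t ∈ Ioo 0 1) :
      (N ⊙ (M + t • N).map f' - N ⊙ (0 + t • N).map f').PosSemidef := by
    have htN : (0 + t • N).PosSemidef := PosSemidef.zero.add (hN.smul ht.1.le)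
    have hle : 0 + t • N ≤ M + t • N := add_le_add_left hM.nonneg _
    have hsub (X Y : Matrix n n ℝ) : N ⊙ X - N ⊙ Y = N ⊙ (X - Y) := by
      ext i j
      simp [mul_sub]
    exact hsub _ _ ▸ hN.hadamard (Matrix.le_iff.1 (hmono _ _ htN hle))
  have hherm : ((M + N).map f - N.map f).IsHermitian :=
    (isHermitian_map (hM.add hN).isHermitian f).sub (isHermitian_map hN.isHermitian f)
  have hpath := le_of_hasDerivAt (Φ := fun t => (M + t • N).map f - (0 + t • N).map f)
    zero_le_one
    (by simpa [hmap0] using isHermitian_map hM.isHermitian f)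
    (by simpa using hherm)
    (fun t i j =>
      (hasDerivAt_map_add_smul hd M N t i j).sub (hasDerivAt_map_add_smul hd 0 N t i j))
    hpos
  exact le_sub_iff_add_le.1 (by simpa [hmap0] using hpath)

end EntrywiseCalculus

section Multiplicative

lemma map_vecMulVec_of_map_mul {R S m n : Type*} [Mul R] [Mul S] {f : R → S}
    (hmul : ∀ x y, f (x * y) = f x * f y) (u : m → R) (v : n → R) :
    (vecMulVec u v).map f = vecMulVec (f ∘ u) (f ∘ v) := by
  ext i j
  simp [vecMulVec_apply, hmul]

lemma posSemidef_map_of_map_le_map {n : Type*} [Finite n] {f : ℝ → ℝ}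
    (hmul : ∀ x y, f (x * y) = f x * f y) (k : n)
    (hmono : ∀ M N : Matrix {i // i ≠ k} {i // i ≠ k} ℝ, M.PosSemidef → M ≤ N →
      M.map f ≤ N.map f)
    {A : Matrix n n ℝ} (hA : A.PosSemidef) : (A.map f).PosSemidef := by
  obtain ⟨z, hz, hcol⟩ := exists_vecMulVec_le hA k
  have hrow (i : n) : A k i = z k * z i := by
    rw [mul_comm, ← hcol, ← hA.isHermitian.apply, star_trivial]
  -- Since `A` and `z zᵀ` agree on row and column `k`, so do their images under `f`.
  have hle : (vecMulVec z z).map f ≤ A.map f := by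
    refine posSemidef_of_submatrix (.subtype (· ≠ k)) (fun i j hij => ?_) ?_
    · have hij' : i = k ∨ j = k := by simpa using hij
      rcases hij' with rfl | rfl
      · simp [vecMulVec_apply, hrow]
      · simp [vecMulVec_apply, hcol]
    · exact hmono _ _ ((posSemidef_vecMulVec_self z).submatrix _)
        (Matrix.le_iff.2 ((Matrix.le_iff.1 hz).submatrix _))
  rw [map_vecMulVec_of_map_mul hmul] at hle
  exact ((posSemidef_vecMulVec_self _).nonneg.trans hle).posSemidef

end Multiplicative

section SignedPowers

variable {α : ℝ}

lemma real_sign_mul (x y : ℝ) : Real.sign (x * y) = Real.sign x * Real.sign y := by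
  rcases lt_trichotomy x 0 with hx | rfl | hx <;> rcases lt_trichotomy y 0 with hy | rfl | hy <;>
    simp [Real.sign_of_neg, Real.sign_of_pos, *, mul_pos_of_neg_of_neg, mul_neg_of_neg_of_pos,
      mul_neg_of_pos_of_neg]

lemma phiF_eq_abs_rpow (hα : α ≠ 0) : phiF α = fun x => |x| ^ α := by
  funext x
  rcases eq_or_ne x 0 with rfl | hx
  · simp [phiF, hα]
  · simp [phiF, hx]

lemma abs_rpow_mul_self (α x : ℝ) : |x| ^ α * x = psiF (α + 1) x := by
  rcases eq_or_ne x 0 with rfl | hx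
  · simp [psiF]
  rw [psiF, Real.rpow_add_one (abs_ne_zero.2 hx), mul_left_comm]
  congr 1
  rcases hx.lt_or_gt with hx | hx
  · simp [Real.sign_of_neg hx, abs_of_neg hx]
  · simp [Real.sign_of_pos hx, abs_of_pos hx]

lemma hasDerivAt_phiF (hα : 1 < α) (x : ℝ) : HasDerivAt (phiF α) (α * psiF (α - 1) x) x := by
  have h := abs_rpow_mul_self (α - 2) x
  rw [show α - 2 + 1 = α - 1 by ring] at h
  rw [phiF_eq_abs_rpow (by positivity), ← h, ← mul_assoc]
  exact hasDerivAt_abs_rpow x hα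

lemma hasDerivAt_psiF_zero (hα : 1 < α) : HasDerivAt (psiF α) 0 0 := by
  have hbound : psiF α =O[𝓝 0] phiF α := by
    refine .of_bound 1 (.of_forall fun x => ?_)
    rcases eq_or_ne x 0 with rfl | hx
    · simp [psiF]
    · rcases Real.sign_apply_eq_of_ne_zero x hx with h | h <;> simp [psiF, phiF, hx, h]
  have hphi : phiF α =o[𝓝 0] fun x => x := by
    have h0 : phiF α 0 = 0 := if_pos rfl
    simpa [psiF, h0] using hasDerivAt_iff_isLittleO_nhds_zero.1 (hasDerivAt_phiF hα 0)
  rw [hasDerivAt_iff_isLittleO_nhds_zero]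
  have h0 : psiF α 0 = 0 := by simp [psiF]
  simpa [h0] using hbound.trans_isLittleO hphi

lemma hasDerivAt_psiF (hα : 1 < α) (x : ℝ) : HasDerivAt (psiF α) (α * phiF (α - 1) x) x := by
  rcases eq_or_ne x 0 with rfl | hx
  · simpa [phiF] using hasDerivAt_psiF_zero hα
  have hsign : ∀ᶠ y in 𝓝 x, Real.sign y = Real.sign x := by
    rcases hx.lt_or_gt with hx | hx
    · filter_upwards [eventually_lt_nhds hx] with y hy
      rw [Real.sign_of_neg hy, Real.sign_of_neg hx]
    · filter_upwards [eventually_gt_nhds hx] with y hy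
      rw [Real.sign_of_pos hy, Real.sign_of_pos hx]
  have heq : psiF α =ᶠ[𝓝 x] fun y => Real.sign x * phiF α y := by
    filter_upwards [hsign, eventually_ne_nhds hx] with y hy hy0
    simp [psiF, phiF, hy, hy0]
  have hsq : Real.sign x * Real.sign x = 1 := by
    rcases Real.sign_apply_eq_of_ne_zero x hx with h | h <;> simp [h]
  refine (((hasDerivAt_phiF hα x).const_mul _).congr_of_eventuallyEq heq).congr_deriv ?_
  simp only [psiF, phiF, hx, if_false]
  linear_combination α * |x| ^ (α - 1) * hsq

lemma continuous_psiF : Continuous psiF := by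
  refine continuous_pi fun x => ?_
  rcases eq_or_ne x 0 with rfl | hx
  · simpa [psiF] using continuous_const
  · exact continuous_const.mul (Real.continuous_const_rpow (abs_ne_zero.2 hx))

lemma continuous_phiF : Continuous phiF := by
  refine continuous_pi fun x => ?_
  rcases eq_or_ne x 0 with rfl | hx
  · simpa [phiF] using continuous_const
  · simpa [phiF, hx] using Real.continuous_const_rpow (abs_ne_zero.2 hx)

end SignedPowers

/-- `f` is `ψ_α` or `φ_α`, the odd or the even extension of `x ↦ x ^ α`. The two are treated
together because the derivative of one is a multiple of the other, with exponent `α - 1`. -/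
def IsPowerFun (α : ℝ) (f : ℝ → ℝ) : Prop := f = psiF α ∨ f = phiF α

namespace IsPowerFun

variable {α : ℝ} {f : ℝ → ℝ}

lemma map_zero (hf : IsPowerFun α f) : f 0 = 0 := by
  rcases hf with rfl | rfl <;> simp [psiF, phiF]

lemma map_of_pos (hf : IsPowerFun α f) {x : ℝ} (hx : 0 < x) : f x = x ^ α := by
  rcases hf with rfl | rfl
  · simp [psiF, Real.sign_of_pos hx, abs_of_pos hx]
  · simp [phiF, hx.ne', abs_of_pos hx]

lemma map_one (hf : IsPowerFun α f) : f 1 = 1 := by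
  simp [hf.map_of_pos one_pos]

lemma map_mul (hf : IsPowerFun α f) (x y : ℝ) : f (x * y) = f x * f y := by
  rcases hf with rfl | rfl
  · simp only [psiF, real_sign_mul, abs_mul, Real.mul_rpow (abs_nonneg x) (abs_nonneg y)]
    ring
  · by_cases hx : x = 0 <;> by_cases hy : y = 0 <;>
      simp [phiF, hx, hy, abs_mul, Real.mul_rpow (abs_nonneg x) (abs_nonneg y)]

lemma monotoneOn (hf : IsPowerFun α f) (hα : 0 ≤ α) : MonotoneOn f (Ici 0) := by
  intro x hx y hy hxy
  rcases eq_or_lt_of_le (mem_Ici.1 hx) with rfl | hx'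
  · rw [hf.map_zero]
    rcases eq_or_lt_of_le hxy with rfl | hy'
    · exact hf.map_zero.ge
    · rw [hf.map_of_pos hy']
      positivity
  · rw [hf.map_of_pos hx', hf.map_of_pos (hx'.trans_le hxy)]
    exact Real.rpow_le_rpow hx hxy hα

lemma exists_hasDerivAt (hf : IsPowerFun α f) (hα : 1 < α) :
    ∃ g, IsPowerFun (α - 1) g ∧ ∀ x, HasDerivAt f (α * g x) x := by
  rcases hf with rfl | rfl
  · exact ⟨phiF (α - 1), .inr rfl, hasDerivAt_psiF hα⟩
  · exact ⟨psiF (α - 1), .inl rfl, hasDerivAt_phiF hα⟩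

-- Allows an exponent to be perturbed upwards, past `1`, where `f` need not be differentiable.
lemma mem_of_isClosed (hf : IsPowerFun α f) {S : Set (ℝ → ℝ)} (hS : IsClosed S)
    (h : ∀ β > α, ∀ g, IsPowerFun β g → g ∈ S) : f ∈ S := by
  have key (F : ℝ → ℝ → ℝ) (hF : Continuous F) (hpow : ∀ β, IsPowerFun β (F β)) : F α ∈ S :=
    hS.mem_of_tendsto ((hF.tendsto α).mono_left (nhdsWithin_le_nhds (s := Ioi α)))
      (eventually_mem_nhdsWithin.mono fun β hβ => h β hβ _ (hpow β))
  rcases hf with rfl | rfl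
  · exact key psiF continuous_psiF fun β => .inl rfl
  · exact key phiF continuous_phiF fun β => .inr rfl

end IsPowerFun

namespace IsPowerFun

lemma map_le_map_of_subsingleton {α : ℝ} {f : ℝ → ℝ} (hf : IsPowerFun α f) {n : Type*}
    [Fintype n] [Subsingleton n] (hα : (Fintype.card n : ℝ) ≤ α + 1) {M N : Matrix n n ℝ}
    (hM : M.PosSemidef) (hMN : M ≤ N) : M.map f ≤ N.map f := by
  have hdiag : N.map f - M.map f = diagonal fun i => f (N i i) - f (M i i) := by
    ext i j
    obtain rfl := Subsingleton.elim i j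
    simp
  rw [Matrix.le_iff, hdiag, posSemidef_diagonal_iff]
  intro i
  have hcard : (1 : ℝ) ≤ Fintype.card n := by exact_mod_cast Fintype.card_pos_iff.2 ⟨i⟩
  have hMi : 0 ≤ M i i := hM.diag_nonneg
  have hle : M i i ≤ N i i := by simpa using (Matrix.le_iff.1 hMN).diag_nonneg (i := i)
  exact sub_nonneg.2 (hf.monotoneOn (by linarith) hMi (hMi.trans hle) hle)

theorem map_le_map {n : Type*} [Fintype n] {α : ℝ} {f : ℝ → ℝ} (hf : IsPowerFun α f)
    (hα : (Fintype.card n : ℝ) ≤ α + 1) {M N : Matrix n n ℝ} (hM : M.PosSemidef) (hMN : M ≤ N) :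
    M.map f ≤ N.map f := by
  classical
  induction hn : Fintype.card n using Nat.strong_induction_on generalizing n α f with | _ d ih
  rcases subsingleton_or_nontrivial n with _ | hnt
  · exact hf.map_le_map_of_subsingleton hα hM hMN
  refine hf.mem_of_isClosed (S := {f | M.map f ≤ N.map f})
    (isClosed_setOf_matrix_le (continuous_matrix_map M) (continuous_matrix_map N))
    fun β hβ g hg => ?_
  have hcard : (2 : ℝ) ≤ Fintype.card n := by exact_mod_cast Fintype.one_lt_card (α := n)
  obtain ⟨g', hg', hd⟩ := hg.exists_hasDerivAt (by linarith)
  obtain ⟨k⟩ := hnt.to_nonempty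
  have hcompl : Fintype.card {i // i ≠ k} + 1 = Fintype.card n := by
    rw [Fintype.card_subtype_compl, Fintype.card_subtype_eq, Nat.sub_add_cancel Fintype.card_pos]
  have hα' : (Fintype.card {i // i ≠ k} : ℝ) ≤ β - 1 + 1 := by
    rw [← hcompl] at hα
    push_cast at hα
    linarith
  have hpos (A : Matrix n n ℝ) (hA : A.PosSemidef) : (A.map g').PosSemidef :=
    posSemidef_map_of_map_le_map hg'.map_mul k
      (fun _ _ hM hMN => ih _ (by omega) hg' hα' hM hMN rfl) hA
  exact map_le_map_of_hasDerivAt hd (fun A hA => (hpos A hA).smul (by linarith : 0 ≤ β)) hM hMN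

theorem map_add_map_le_map_add {n : Type*} [Fintype n] {α : ℝ} {f : ℝ → ℝ}
    (hf : IsPowerFun α f) (hα : (Fintype.card n : ℝ) ≤ α) {M N : Matrix n n ℝ}
    (hM : M.PosSemidef) (hN : N.PosSemidef) : M.map f + N.map f ≤ (M + N).map f := by
  rcases isEmpty_or_nonempty n with _ | _
  · exact (Subsingleton.elim _ _).le
  refine hf.mem_of_isClosed (S := {f | M.map f + N.map f ≤ (M + N).map f})
    (isClosed_setOf_matrix_le ((continuous_matrix_map M).add (continuous_matrix_map N))
      (continuous_matrix_map (M + N))) fun β hβ g hg => ?_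
  have hcard : (1 : ℝ) ≤ Fintype.card n := by exact_mod_cast Fintype.card_pos (α := n)
  obtain ⟨g', hg', hd⟩ := hg.exists_hasDerivAt (by linarith)
  refine map_add_map_le_map_add_of_hasDerivAt hg.map_zero hd (fun A B hA hAB => ?_) hM hN
  have hle : A.map g' ≤ B.map g' := hg'.map_le_map (by linarith) hA hAB
  exact smul_le_smul_of_nonneg_left hle (by linarith : 0 ≤ β)

end IsPowerFun

section Polynomial

open Polynomial

lemma eq_X_pow_of_eval_mul {R : Type*} [CommRing R] [IsDomain R] [Infinite R] {p : R[X]}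
    (hp : p ≠ 0) (hmul : ∀ x y, p.eval (x * y) = p.eval x * p.eval y) :
    p = X ^ p.natDegree := by
  have hcomp (y : R) : p.comp (C y * X) = C (p.eval y) * p :=
    Polynomial.funext fun x => by simp [hmul]
  refine Polynomial.funext fun y => ?_
  have hlead := congrArg (coeff · p.natDegree) (hcomp y)
  simp only [comp_C_mul_X_coeff, coeff_C_mul] at hlead
  rw [eval_pow, eval_X]
  exact mul_right_cancel₀ (leadingCoeff_ne_zero.2 hp) (hlead.symm.trans (mul_comm _ _))

lemma IsPowerFun.exists_eq_pow {α : ℝ} {f : ℝ → ℝ} (hf : IsPowerFun α f) {p : ℝ[X]}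
    (hp : ∀ x, p.eval x = f x) : ∃ k ≠ 0, f = fun x => x ^ k := by
  have hp0 : p ≠ 0 := by
    rintro rfl
    simpa [hf.map_one] using hp 1
  have hpow : f = fun x => x ^ p.natDegree := by
    funext x
    rw [← hp]
    nth_rw 1 [eq_X_pow_of_eval_mul hp0 fun x y => by simp only [hp, hf.map_mul]]
    simp
  refine ⟨p.natDegree, fun hk => ?_, hpow⟩
  have h0 := hf.map_zero
  simp [hpow, hk] at h0

end Polynomial

section IntegerPowers

lemma matrix_map_pow_succ {m n R : Type*} [Monoid R] (M : Matrix m n R) (k : ℕ) :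
    M.map (· ^ (k + 1)) = M ⊙ M.map (· ^ k) := by
  ext i j
  simp [pow_succ']

variable {n : Type*} {M N : Matrix n n ℝ}

lemma posSemidef_map_pow_succ (hM : M.PosSemidef) (k : ℕ) :
    (M.map (· ^ (k + 1))).PosSemidef := by
  induction k with
  | zero => simpa using hM
  | succ k ih => exact matrix_map_pow_succ M (k + 1) ▸ hM.hadamard ih

lemma map_pow_add_map_pow_le_map_add_pow (hM : M.PosSemidef) (hN : N.PosSemidef) (k : ℕ) :
    M.map (· ^ (k + 1)) + N.map (· ^ (k + 1)) ≤ (M + N).map (· ^ (k + 1)) := by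
  induction k with
  | zero => simp
  | succ k ih =>
    have hsplit : (M + N).map (· ^ (k + 2)) - (M.map (· ^ (k + 2)) + N.map (· ^ (k + 2))) =
        (M + N) ⊙ ((M + N).map (· ^ (k + 1)) - (M.map (· ^ (k + 1)) + N.map (· ^ (k + 1)))) +
          M ⊙ N.map (· ^ (k + 1)) + N ⊙ M.map (· ^ (k + 1)) := by
      ext i j
      simp only [Matrix.sub_apply, Matrix.add_apply, Matrix.map_apply, hadamard_apply]
      ring
    rw [Matrix.le_iff, hsplit]
    exact (((hM.add hN).hadamard (Matrix.le_iff.1 ih)).add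
      (hM.hadamard (posSemidef_map_pow_succ hN k))).add
      (hN.hadamard (posSemidef_map_pow_succ hM k))

end IntegerPowers

section Moments

open Polynomial in
lemma exists_moments_eq_zero {F : Type*} [Field F] [CharZero F] {f : F → F} (h0 : f 0 = 0)
    (hf : ∀ p : F[X], ∃ x, p.eval x ≠ f x) (m : ℕ) :
    ∃ v w : Fin (m + 1) → F, (∀ k ∈ Finset.Icc 1 m, ∑ i, w i * v i ^ k = 0) ∧
      ∑ i, w i * f (v i) ≠ 0 := by
  let interp (g : F → F) : F[X] :=
    Lagrange.interpolate (Finset.range (m + 1)) Nat.cast fun i => g i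
  obtain ⟨x, hx⟩ := hf (interp f)
  -- The weights of the interpolation error at `x`; the node `0` is dropped since `f 0 = 0`.
  let v : Fin (m + 1) → F := Fin.cons x fun i => ((i + 1 : ℕ) : F)
  let w : Fin (m + 1) → F := Fin.cons (-1) fun i =>
    (Lagrange.basis (Finset.range (m + 1)) Nat.cast (i + 1 : ℕ)).eval x
  have hsum (g : F → F) (hg : g 0 = 0) : ∑ i, w i * g (v i) = (interp g).eval x - g x := by
    simp only [interp, Lagrange.interpolate_apply, eval_finsetSum, eval_mul, eval_C]
    rw [Finset.sum_range_succ', ← Fin.sum_univ_eq_sum_range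
      (fun i => g ((i + 1 : ℕ) : F) * (Lagrange.basis _ _ (i + 1)).eval x), Fin.sum_univ_succ]
    simp only [v, w, Fin.cons_zero, Fin.cons_succ, Nat.cast_zero, hg, mul_comm (g _)]
    ring
  refine ⟨v, w, fun k hk => ?_, ?_⟩
  · obtain ⟨hk1, hkm⟩ := Finset.mem_Icc.1 hk
    have hX : (X ^ k : F[X]) = interp (· ^ k) := by
      refine Lagrange.eq_interpolate_of_eval_eq _ Nat.cast_injective.injOn ?_ fun i _ => by simp
      rw [degree_X_pow, Finset.card_range]
      exact_mod_cast Nat.lt_succ_of_le hkm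
    rw [hsum (· ^ k) (zero_pow (by omega)), ← hX]
    simp
  · rw [hsum f h0, sub_ne_zero]
    exact hx

lemma sum_sum_mul_sum_pow_of_moments_eq_zero {R ι : Type*} [CommRing R] [Fintype ι] {m : ℕ}
    {v w : ι → R} (hmom : ∀ k ∈ Finset.Icc 1 m, ∑ i, w i * v i ^ k = 0) (c : ℕ → R) (ε : R) :
    ∑ i, ∑ j, w i * w j * ∑ k ∈ Finset.range (m + 1), c k * (ε * (v i * v j)) ^ k =
      c 0 * (∑ i, w i) ^ 2 := by
  calc _ = ∑ k ∈ Finset.range (m + 1), ∑ i, ∑ j,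
          c k * ε ^ k * ((w i * v i ^ k) * (w j * v j ^ k)) := by
        symm
        rw [Finset.sum_comm]
        refine Finset.sum_congr rfl fun i _ => ?_
        rw [Finset.sum_comm]
        refine Finset.sum_congr rfl fun j _ => ?_
        rw [Finset.mul_sum]
        exact Finset.sum_congr rfl fun k _ => by ring
    _ = ∑ k ∈ Finset.range (m + 1), c k * ε ^ k * (∑ i, w i * v i ^ k) ^ 2 := by
        refine Finset.sum_congr rfl fun k _ => ?_
        rw [sq, Finset.sum_mul_sum]
        simp only [Finset.mul_sum]
    _ = c 0 * (∑ i, w i) ^ 2 := by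
        rw [Finset.sum_eq_single_of_mem 0 (by simp)]
        · simp
        · intro k hk hk0
          have : k ∈ Finset.Icc 1 m := by simp at hk ⊢; omega
          simp [hmom k this]

lemma isBigO_sum_sum_sub_of_moments_eq_zero {ι : Type*} [Fintype ι] {φ : ℝ → ℝ} {c : ℕ → ℝ}
    {m : ℕ} {v w : ι → ℝ}
    (hφ : (fun x => φ x - ∑ k ∈ Finset.range (m + 1), c k * x ^ k) =O[𝓝 0] fun x => x ^ (m + 1))
    (hmom : ∀ k ∈ Finset.Icc 1 m, ∑ i, w i * v i ^ k = 0) :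
    (fun ε => ∑ i, ∑ j, w i * w j * φ (ε * (v i * v j)) - c 0 * (∑ i, w i) ^ 2) =O[𝓝 0]
      fun ε => ε ^ (m + 1) := by
  have hsub (ε : ℝ) : ∑ i, ∑ j, w i * w j * φ (ε * (v i * v j)) - c 0 * (∑ i, w i) ^ 2 =
      ∑ i, ∑ j, w i * w j *
        (φ (ε * (v i * v j)) - ∑ k ∈ Finset.range (m + 1), c k * (ε * (v i * v j)) ^ k) := by
    simp only [← sum_sum_mul_sum_pow_of_moments_eq_zero hmom c ε, ← Finset.sum_sub_distrib,
      ← mul_sub]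
  simp only [hsub]
  refine .fun_sum fun i _ => .fun_sum fun j _ => .const_mul_left ?_ _
  have hlim : Tendsto (fun ε : ℝ => ε * (v i * v j)) (𝓝 0) (𝓝 0) := by
    simpa using (continuous_mul_const (v i * v j)).tendsto 0
  refine (hφ.comp_tendsto hlim).trans ?_
  simp only [Function.comp_def, mul_pow _ (v i * v j), mul_comm _ ((v i * v j) ^ (m + 1))]
  exact isBigO_const_mul_self _ _ _

lemma one_add_rpow_sub_sum_isBigO (α : ℝ) (m : ℕ) :
    (fun x : ℝ => (1 + x) ^ α - ∑ k ∈ Finset.range (m + 1), Ring.choose α k * x ^ k) =O[𝓝 0]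
      fun x => x ^ (m + 1) := by
  have h := (Real.one_add_rpow_hasFPowerSeriesAt_zero (a := α)).isBigO_sub_partialSum_pow (m + 1)
  refine (h.congr_left fun x => ?_).trans (.of_norm_left (.of_norm_right ?_))
  · simp only [FormalMultilinearSeries.partialSum, binomialSeries_apply, zero_add,
      List.ofFn_const, List.prod_replicate, smul_eq_mul]
  · simpa using isBigO_refl _ _

lemma eq_zero_of_rpow_mul_isBigO {a b c : ℝ} (hab : a < b)
    (h : (fun ε : ℝ => ε ^ a * c) =O[𝓝[>] 0] fun ε => ε ^ b) : c = 0 := by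
  have hc : (fun _ : ℝ => c) =O[𝓝[>] 0] fun ε : ℝ => ε ^ (b - a) := by
    refine ((isBigO_refl (fun ε : ℝ => ε ^ (-a)) (𝓝[>] 0)).mul h).congr' ?_ ?_
    · filter_upwards [self_mem_nhdsWithin] with ε (hε : 0 < ε)
      rw [← mul_assoc, ← Real.rpow_add hε, neg_add_cancel, Real.rpow_zero, one_mul]
    · filter_upwards [self_mem_nhdsWithin] with ε (hε : 0 < ε)
      rw [← Real.rpow_add hε, neg_add_eq_sub]
  have hlim : Tendsto (fun ε : ℝ => ε ^ (b - a)) (𝓝[>] 0) (𝓝 0) := by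
    have h := (Real.continuous_rpow_const (sub_nonneg.2 hab.le)).tendsto 0
    rw [Real.zero_rpow (sub_ne_zero.2 hab.ne')] at h
    exact h.mono_left nhdsWithin_le_nhds
  exact tendsto_nhds_unique tendsto_const_nhds (hc.trans_tendsto hlim)

end Moments

namespace IsPowerFun

variable {α : ℝ} {f : ℝ → ℝ} {ι : Type*} [Fintype ι]

lemma map_mul_sq_sum_le (hf : IsPowerFun α f)
    (hsup : ∀ u v : ι → ℝ, (vecMulVec u u).map f + (vecMulVec v v).map f ≤
      (vecMulVec u u + vecMulVec v v).map f) (v w : ι → ℝ) {ε : ℝ} (hε : 0 ≤ ε) :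
    f ε * (∑ i, w i * f (v i)) ^ 2 ≤
      ∑ i, ∑ j, w i * w j * f (1 + ε * (v i * v j)) - (∑ i, w i) ^ 2 := by
  have hroot : f √ε ^ 2 = f ε := by rw [sq, ← hf.map_mul, Real.mul_self_sqrt hε]
  have hone : w ⬝ᵥ (f ∘ (1 : ι → ℝ)) = ∑ i, w i := by simp [dotProduct, hf.map_one]
  have hscale : w ⬝ᵥ (f ∘ (√ε • v)) = f √ε * ∑ i, w i * f (v i) := by
    simp only [dotProduct, Function.comp_apply, Pi.smul_apply, smul_eq_mul, hf.map_mul,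
      Finset.mul_sum, mul_left_comm]
  have hsum : w ⬝ᵥ (vecMulVec 1 1 + vecMulVec (√ε • v) (√ε • v)).map f *ᵥ w =
      ∑ i, ∑ j, w i * w j * f (1 + ε * (v i * v j)) := by
    simp only [dotProduct, mulVec, Finset.mul_sum]
    refine Finset.sum_congr rfl fun i _ => Finset.sum_congr rfl fun j _ => ?_
    have hentry : (1 : ℝ) * 1 + √ε * v i * (√ε * v j) = 1 + ε * (v i * v j) := by
      linear_combination (v i * v j) * Real.mul_self_sqrt hε
    simp only [Matrix.map_apply, Matrix.add_apply, vecMulVec_apply, Pi.one_apply, Pi.smul_apply,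
      smul_eq_mul, hentry]
    ring
  have hquad := (Matrix.le_iff.1 (hsup 1 (√ε • v))).dotProduct_mulVec_nonneg w
  rw [star_trivial, sub_mulVec, add_mulVec, dotProduct_sub, dotProduct_add, hsum,
    map_vecMulVec_of_map_mul hf.map_mul, map_vecMulVec_of_map_mul hf.map_mul,
    dotProduct_vecMulVec_mulVec_self, dotProduct_vecMulVec_mulVec_self, hone, hscale, mul_pow,
    hroot] at hquad
  linarith

lemma sum_mul_map_eq_zero (hf : IsPowerFun α f)
    (hsup : ∀ u v : ι → ℝ, (vecMulVec u u).map f + (vecMulVec v v).map f ≤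
      (vecMulVec u u + vecMulVec v v).map f) {m : ℕ} (hm : α < m + 1) {v w : ι → ℝ}
    (hmom : ∀ k ∈ Finset.Icc 1 m, ∑ i, w i * v i ^ k = 0) : ∑ i, w i * f (v i) = 0 := by
  have htaylor : (fun x => f (1 + x) - ∑ k ∈ Finset.range (m + 1), Ring.choose α k * x ^ k)
      =O[𝓝 0] fun x => x ^ (m + 1) := by
    refine (one_add_rpow_sub_sum_isBigO α m).congr' ?_ .rfl
    filter_upwards [eventually_gt_nhds (show (-1 : ℝ) < 0 by norm_num)] with x hx
    rw [hf.map_of_pos (by linarith)]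
  have hexp := isBigO_sum_sum_sub_of_moments_eq_zero htaylor hmom
  rw [Ring.choose_zero_right, one_mul] at hexp
  refine (pow_eq_zero_iff two_ne_zero).1 (eq_zero_of_rpow_mul_isBigO hm ?_)
  refine (IsBigO.of_norm_eventuallyLE ?_).trans
    ((hexp.mono (nhdsWithin_le_nhds (s := Ioi 0))).congr_right fun ε => ?_)
  · filter_upwards [self_mem_nhdsWithin] with ε (hε : 0 < ε)
    have h := hf.map_mul_sq_sum_le hsup v w hε.le
    rw [hf.map_of_pos hε] at h
    rwa [Real.norm_of_nonneg (by positivity)]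
  · exact_mod_cast (Real.rpow_natCast ε (m + 1)).symm

end IsPowerFun

section Blocks

variable {n p : Type*} [Finite n] [Fintype p] [DecidableEq p]

lemma posSemidef_fromBlocks_mul_transpose (W : Matrix n p ℝ) :
    (fromBlocks (W * Wᵀ) W Wᵀ 1).PosSemidef := by
  let : Invertible (1 : Matrix p p ℝ) := invertibleOne
  simpa using (PosDef.fromBlocks₂₂ (W * Wᵀ) W PosDef.one).2 (by simpa using PosSemidef.zero)

lemma map_mul_transpose_map_le {f : ℝ → ℝ} (h0 : f 0 = 0) (h1 : f 1 = 1) {A : Matrix n n ℝ}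
    {W : Matrix n p ℝ} (h : ((fromBlocks A W Wᵀ 1).map f).PosSemidef) :
    W.map f * (W.map f)ᵀ ≤ A.map f := by
  let : Invertible (1 : Matrix p p ℝ) := invertibleOne
  rw [fromBlocks_map, Matrix.map_one f h0 h1, transpose_map] at h
  simpa [Matrix.le_iff] using
    (PosDef.fromBlocks₂₂ (A.map f) (W.map f) PosDef.one).1 (by simpa using h)

end Blocks

section Graph

variable {V : Type*} [Fintype V] {G : SimpleGraph V} {f : ℝ → ℝ}

lemma posSemidef_map_of_mem_PsetG_comap {m : Type*} [Fintype m]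
    (hpres : ∀ M ∈ PsetG G univ, (M.map f).PosSemidef) (e : m ↪ V) {M : Matrix m m ℝ}
    (hM : M ∈ PsetG (G.comap e) univ) : (M.map f).PosSemidef := by
  let N : Matrix V V ℝ :=
    of fun i j => Function.extend e (fun k => Function.extend e (M k) 0 j) 0 i
  have hN (k l : m) : N (e k) (e l) = M k l := by simp [N, e.injective.extend_apply]
  have hN0 (i j : V) (hij : i ∉ range e ∨ j ∉ range e) : N i j = 0 := by
    by_cases hi : i ∈ range e
    · obtain ⟨k, rfl⟩ := hi
      have hj : ¬ ∃ l, e l = j := hij.resolve_left (not_not.2 ⟨k, rfl⟩)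
      simp [N, e.injective.extend_apply, Function.extend_apply' _ _ _ hj]
    · have hi' : ¬ ∃ k, e k = i := hi
      simp [N, Function.extend_apply' _ _ _ hi']
  have hsub : N.submatrix e e = M := by
    ext k l
    exact hN k l
  have hmem : N ∈ PsetG G univ := by
    refine ⟨posSemidef_of_submatrix e hN0 (hsub ▸ hM.1), fun _ _ => mem_univ _, ?_⟩
    intro i j hij hadj
    by_cases h : i ∈ range e ∧ j ∈ range e
    · obtain ⟨⟨k, rfl⟩, ⟨l, rfl⟩⟩ := h
      exact (hN k l).trans (hM.2.2 k l (fun hkl => hij (congrArg e hkl)) hadj)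
    · exact hN0 i j (not_and_or.1 h)
  rw [← hsub, ← submatrix_map]
  exact (hpres N hmem).submatrix e

lemma IsPowerFun.map_vecMulVec_add_le_of_isClique {α : ℝ} (hf : IsPowerFun α f)
    (hpres : ∀ M ∈ PsetG G univ, (M.map f).PosSemidef) {n : Type*} [Finite n] (e : n ↪ V)
    (hclique : G.IsClique (range e)) {v₁ v₂ : V} (hne : v₁ ≠ v₂) (hadj₁ : ∀ i, G.Adj v₁ (e i))
    (hadj₂ : ∀ i, G.Adj v₂ (e i)) (u v : n → ℝ) :
    (vecMulVec u u).map f + (vecMulVec v v).map f ≤ (vecMulVec u u + vecMulVec v v).map f := by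
  cases nonempty_fintype n
  have hadj (k : Fin 2) (i : n) : G.Adj (![v₁, v₂] k) (e i) := by
    fin_cases k
    exacts [hadj₁ i, hadj₂ i]
  have hinj : Function.Injective ![v₁, v₂] := by
    simp [Function.Injective, Fin.forall_fin_two, hne, hne.symm]
  let e' : n ⊕ Fin 2 ↪ V :=
    ⟨Sum.elim e ![v₁, v₂], e.injective.sumElim hinj fun i k => (hadj k i).ne'⟩
  let W : Matrix n (Fin 2) ℝ := of fun i => ![u i, v i]
  have hW : W * Wᵀ = vecMulVec u u + vecMulVec v v := by
    ext i j
    simp [W, mul_apply, vecMulVec_apply]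
  have hWf : W.map f * (W.map f)ᵀ = (vecMulVec u u).map f + (vecMulVec v v).map f := by
    ext i j
    simp [W, mul_apply, vecMulVec_apply, hf.map_mul]
  have hmem : fromBlocks (W * Wᵀ) W Wᵀ 1 ∈ PsetG (G.comap e') univ := by
    refine ⟨posSemidef_fromBlocks_mul_transpose W, fun _ _ => mem_univ _, ?_⟩
    rintro (i | k) (j | l) hij hnadj
    · exact absurd (hclique ⟨i, rfl⟩ ⟨j, rfl⟩ fun h => hij (congrArg _ (e.injective h))) hnadj
    · exact absurd (hadj l i).symm hnadj
    · exact absurd (hadj k j) hnadj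
    · exact one_apply_ne fun h => hij (congrArg _ h)
  rw [← hW, ← hWf]
  exact map_mul_transpose_map_le hf.map_zero hf.map_one
    (posSemidef_map_of_mem_PsetG_comap hpres e' hmem)

lemma IsPowerFun.card_le_of_isClique {α : ℝ} (hf : IsPowerFun α f)
    (hpoly : ∀ p : Polynomial ℝ, ∃ x, p.eval x ≠ f x)
    (hpres : ∀ M ∈ PsetG G univ, (M.map f).PosSemidef) {n : Type*} [Fintype n] [Nonempty n]
    (e : n ↪ V) (hclique : G.IsClique (range e)) {v₁ v₂ : V} (hne : v₁ ≠ v₂)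
    (hadj₁ : ∀ i, G.Adj v₁ (e i)) (hadj₂ : ∀ i, G.Adj v₂ (e i)) :
    (Fintype.card n : ℝ) ≤ α := by
  by_contra! hα
  have hm : ⌊α⌋₊ + 1 ≤ Fintype.card n := (Nat.floor_lt' Fintype.card_ne_zero).2 hα
  obtain ⟨v, w, hmom, hsum⟩ := exists_moments_eq_zero hf.map_zero hpoly ⌊α⌋₊
  let ι : Fin (⌊α⌋₊ + 1) ↪ V :=
    ((Fin.castLEEmb hm).trans (Fintype.equivFin n).symm.toEmbedding).trans e
  have hι : range ι ⊆ range e := range_subset_iff.2 fun k => mem_range_self _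
  refine hsum (hf.sum_mul_map_eq_zero (fun u v => ?_) (Nat.lt_floor_add_one α) hmom)
  exact hf.map_vecMulVec_add_le_of_isClique hpres ι (hclique.subset hι) hne
    (fun _ => hadj₁ _) (fun _ => hadj₂ _) u v

theorem IsPowerFun.map_add_map_le_map_add_of_isClique {α : ℝ} (hf : IsPowerFun α f)
    (hpres : ∀ M ∈ PsetG G univ, (M.map f).PosSemidef) {n : Type*} [Finite n]
    (e : n ↪ V) (hclique : G.IsClique (range e)) {v₁ v₂ : V} (hne : v₁ ≠ v₂)
    (hadj₁ : ∀ i, G.Adj v₁ (e i)) (hadj₂ : ∀ i, G.Adj v₂ (e i)) {M N : Matrix n n ℝ}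
    (hM : M.PosSemidef) (hN : N.PosSemidef) : M.map f + N.map f ≤ (M + N).map f := by
  cases nonempty_fintype n
  rcases isEmpty_or_nonempty n with _ | _
  · exact (Subsingleton.elim _ _).le
  by_cases hpoly : ∃ p : Polynomial ℝ, ∀ x, p.eval x = f x
  · obtain ⟨p, hp⟩ := hpoly
    obtain ⟨k, hk, rfl⟩ := hf.exists_eq_pow hp
    obtain ⟨l, rfl⟩ := Nat.exists_eq_succ_of_ne_zero hk
    exact map_pow_add_map_pow_le_map_add_pow hM hN l
  · push Not at hpoly
    exact hf.map_add_map_le_map_add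
      (hf.card_le_of_isClique hpoly hpres e hclique hne hadj₁ hadj₂) hM hN

theorem decomposition_superadditive_general (G : SimpleGraph V) {α : ℝ} (hf : IsPowerFun α f)
    (hpres : ∀ M ∈ PsetG G univ, (M.map f).PosSemidef) {S : Set V} (hS : G.IsClique S)
    {v₁ v₂ : V} (hne : v₁ ≠ v₂) (hadj₁ : ∀ c ∈ S, G.Adj v₁ c) (hadj₂ : ∀ c ∈ S, G.Adj v₂ c)
    {M N : Matrix V V ℝ} (hM : M ∈ PsetSub G S) (hN : N ∈ PsetSub G S) :
    (M + N).map f - M.map f - N.map f ∈ PsetSub G S := by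
  have hzero {i j : V} (hMij : M i j = 0) (hNij : N i j = 0) :
      ((M + N).map f - M.map f - N.map f) i j = 0 := by
    simp [hMij, hNij, hf.map_zero]
  have hsupp (i j : V) (hij : i ∉ S ∨ j ∉ S) := hzero (hM.2.1 i j hij) (hN.2.1 i j hij)
  let e : S ↪ V := .subtype (· ∈ S)
  have hrange : range e = S := Subtype.range_coe
  have hle := hf.map_add_map_le_map_add_of_isClique hpres e (hrange.symm ▸ hS) hne
    (fun i => hadj₁ i i.2) (fun i => hadj₂ i i.2) (hM.1.submatrix e) (hN.1.submatrix e)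
  refine ⟨posSemidef_of_submatrix e (hrange.symm ▸ hsupp) ?_, hsupp,
    fun i j hij hadj => hzero (hM.2.2 i j hij hadj) (hN.2.2 i j hij hadj)⟩
  rw [sub_sub]
  exact Matrix.le_iff.1 hle

end Graph

/-- **Theorem 3.3(2)**: if `(A,C,B)` is a decomposition of `G`, `f = ψ_α` or `f = φ_α`, and
`f[−]` preserves positivity on `P_G`, then `f[−]` is Loewner super-additive on `P_{G_{C'}}(ℝ)`
for every `C' ⊆ C` admitting vertices `v₁ ∈ A`, `v₂ ∈ B` adjacent to every vertex of `C'`. -/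
theorem decomposition_superadditive {V : Type*} [Fintype V] (G : SimpleGraph V)
    (A C B : Set V) (hdec : IsDecomposition G A C B)
    (α : ℝ) (f : ℝ → ℝ) (hf : f = psiF α ∨ f = phiF α)
    (hpres : ∀ M ∈ PsetG G univ, (M.map f).PosSemidef)
    (C' : Set V) (hC' : C' ⊆ C)
    (v₁ v₂ : V) (hv₁ : v₁ ∈ A) (hv₂ : v₂ ∈ B)
    (hadj₁ : ∀ c ∈ C', G.Adj v₁ c) (hadj₂ : ∀ c ∈ C', G.Adj v₂ c) :
    ∀ M ∈ PsetSub G C', ∀ N ∈ PsetSub G C',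
      ((M + N).map f - M.map f - N.map f) ∈ PsetSub G C' := by
  have hclique : G.IsClique C' := fun c₁ h₁ c₂ h₂ =>
    hdec.2.2.2.2.2 c₁ (hC' h₁) c₂ (hC' h₂)
  have hne : v₁ ≠ v₂ := hdec.2.2.1.ne_of_mem hv₁ hv₂
  exact fun M hM N hN =>
    decomposition_superadditive_general G hf hpres hclique hne hadj₁ hadj₂ hM hN
end
end
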